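/- For every p ∈ [0,1] there exists a nonnegative random time T that is an unbiased shift of B embedding the Dirac measure δ₀ and satisfies P₀{T = 0} = p. -/

import Mathlib

/-!
Work with the law `W` of `B` on the space of continuous paths. The local time of a path at `0` is
its occupation density there. It is a measure attached to the path, and it is diffuse and has
infinite mass on both half-lines. When the starting point of the path is spread over `ℝ` by
Lebesgue measure, the resulting (infinite) law is invariant under time shifts, and the local time
disintegrates it over the pairs consisting of a path and one of its zeros; seen from such a zero,
the path has law `W`. In other words, `W` is the Palm measure of the local time.

Moving every point of the line to the time at which one further unit of local time has been
collected preserves the local time of almost every path, so the shift `S` of a path of law `W` by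
the time `τ > 0` at which it has collected one unit of local time preserves `W`.

Let `D` be a set of paths of probability `1 - p`, which exists because `B 1 - B 0` has a diffuse
law. The map sending the paths in `D` to their first return to `D` under `S`, and fixing the others,
preserves `W` by Kac's argument. It is again a shift by a nonnegative time, which vanishes almost
surely exactly off `D`. Finally, `B` is at `0` at this time because a path of law `W` starts at `0`.
-/

open MeasureTheory ProbabilityTheory

/-- A two-sided standard Brownian motion: a.s. continuous paths, `B₀ = 0`, independent
increments, and `B_t − B_s` centered Gaussian with variance `t − s` for `s < t`. -/
structure IsTwoSidedBM {Ω : Type*} [MeasurableSpace Ω] (P : Measure Ω) (B : ℝ → Ω → ℝ) :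
    Prop where
  aemeas : ∀ t : ℝ, AEMeasurable (B t) P
  cont : ∀ᵐ ω ∂P, Continuous fun t => B t ω
  zero : ∀ᵐ ω ∂P, B 0 ω = 0
  indepIncr : ∀ (n : ℕ) (t : Fin (n + 1) → ℝ), Monotone t →
    iIndepFun (m := fun _ => inferInstance)
      (fun (i : Fin n) ω => B (t i.succ) ω - B (t i.castSucc) ω) P
  gaussIncr : ∀ s t : ℝ, s < t →
    Measure.map (fun ω => B t ω - B s ω) P = gaussianReal 0 (Real.toNNReal (t - s))

/-- A random time: a measurable function of the path of `B`. -/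
def IsRandomTime {Ω : Type*} [MeasurableSpace Ω] (B : ℝ → Ω → ℝ) (T : Ω → ℝ) : Prop :=
  @Measurable Ω ℝ (MeasurableSpace.comap (fun ω (t : ℝ) => B t ω) inferInstance) _ T

/-- An unbiased shift: a random time `T` such that `(B_{T+t} − B_T)_{t∈ℝ}` is a two-sided
Brownian motion independent of `B_T`. -/
def IsUnbiasedShift {Ω : Type*} [MeasurableSpace Ω] (P : Measure Ω) (B : ℝ → Ω → ℝ)
    (T : Ω → ℝ) : Prop :=
  IsRandomTime B T ∧
  IsTwoSidedBM P (fun t ω => B (T ω + t) ω - B (T ω) ω) ∧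
  IndepFun (fun ω (t : ℝ) => B (T ω + t) ω - B (T ω) ω) (fun ω => B (T ω) ω) P

/-- `T` embeds the distribution `ν`: `B_T` has law `ν`. -/
def Embeds {Ω : Type*} [MeasurableSpace Ω] (P : Measure Ω) (B : ℝ → Ω → ℝ) (T : Ω → ℝ)
    (ν : Measure ℝ) : Prop :=
  Measure.map (fun ω => B (T ω) ω) P = ν

/-- A stopping time with respect to the filtration `(σ(B_s : s ≤ t))_{t ≥ 0}`. -/
def IsBMStoppingTime {Ω : Type*} [MeasurableSpace Ω] (B : ℝ → Ω → ℝ) (T : Ω → ℝ) : Prop :=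
  ∀ t : ℝ, 0 ≤ t →
    MeasurableSet[⨆ s ∈ Set.Iic t, MeasurableSpace.comap (B s) inferInstance] {ω | T ω ≤ t}

open Set Filter
open scoped ENNReal NNReal Topology

section Differentiation

variable {X : Type*} [MetricSpace X] [MeasurableSpace X] [BorelSpace X]
  [SecondCountableTopology X] [HasBesicovitchCovering X]
  {ν μ : Measure X} [IsLocallyFiniteMeasure ν] [IsLocallyFiniteMeasure μ] {r : ℕ → ℝ}

theorem absolutelyContinuous_of_liminf_closedBall_div_ne_top
    (hr : Tendsto r atTop (𝓝[>] 0))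
    (h : ∀ᵐ x ∂ν,
      liminf (fun n ↦ ν (Metric.closedBall x (r n)) / μ (Metric.closedBall x (r n))) atTop ≠ ∞) :
    ν ≪ μ := by
  have density_ne_zero : ∀ᵐ x ∂ν, μ.rnDeriv ν x ≠ 0 := by
    filter_upwards [h, Besicovitch.ae_tendsto_rnDeriv μ ν, ν.support_mem_ae] with x hx hlim hsupp h0
    refine hx (Tendsto.liminf_eq ?_)
    have := tendsto_inv_iff.2 (hlim.comp hr)
    rw [h0, ENNReal.inv_zero] at this
    refine this.congr' ?_
    have hr0 : Tendsto (fun n ↦ Metric.closedBall x (r n)) atTop (𝓝 x).smallSets :=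
      (tendsto_closedBall_smallSets x).comp (tendsto_nhds_of_tendsto_nhdsWithin hr)
    filter_upwards [hr.eventually self_mem_nhdsWithin,
      hr0.eventually (ν.finiteAt_nhds x).eventually] with n hpos hfin
    exact ENNReal.inv_div (.inl hfin.ne) (.inl ((Measure.mem_support_iff_forall x).1 hsupp _
      (Metric.closedBall_mem_nhds x hpos)).ne')
  exact (withDensity_absolutelyContinuous' (Measure.measurable_rnDeriv μ ν).aemeasurable
    density_ne_zero).trans (Measure.withDensity_rnDeriv_le μ ν).absolutelyContinuous

theorem withDensity_liminf_closedBall_div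
    (hr : Tendsto r atTop (𝓝[>] 0))
    (h : ∀ᵐ x ∂ν,
      liminf (fun n ↦ ν (Metric.closedBall x (r n)) / μ (Metric.closedBall x (r n))) atTop ≠ ∞) :
    μ.withDensity (fun x ↦
      liminf (fun n ↦ ν (Metric.closedBall x (r n)) / μ (Metric.closedBall x (r n))) atTop) =
      ν := by
  conv_rhs => rw [← Measure.withDensity_rnDeriv_eq ν μ
    (absolutelyContinuous_of_liminf_closedBall_div_ne_top hr h)]
  refine withDensity_congr_ae ?_
  filter_upwards [Besicovitch.ae_tendsto_rnDeriv ν μ] with x hx using (hx.comp hr).liminf_eq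

end Differentiation

section KernelLemmas

variable {α β : Type*} [MeasurableSpace α]

lemma withDensity_fst_compProd [MeasurableSpace β] (μ : Measure α) [SFinite μ] (κ : Kernel α β)
    [IsSFiniteKernel κ] {f : α → ℝ≥0} (hf : Measurable f) :
    (μ ⊗ₘ κ).withDensity (fun p ↦ f p.1) = μ.withDensity (fun a ↦ f a) ⊗ₘ κ := by
  refine Measure.ext_of_lintegral _ fun F hF ↦ ?_
  rw [lintegral_withDensity_eq_lintegral_mul _ (by fun_prop) hF,
    Measure.lintegral_compProd (by fun_prop), Measure.lintegral_compProd hF,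
    lintegral_withDensity_eq_lintegral_mul _ (by fun_prop) hF.lintegral_kernel_prod_right']
  refine lintegral_congr fun a ↦ ?_
  simp only [Pi.mul_apply]
  exact lintegral_const_mul _ (by fun_prop)

lemma exists_isSFiniteKernel_compProd_eq_of_isFiniteMeasure [MeasurableSpace β]
    [StandardBorelSpace β] [Nonempty β] {μ : Measure α} [SigmaFinite μ] {ρ : Measure (α × β)}
    [IsFiniteMeasure ρ] (h : ρ.fst ≪ μ) :
    ∃ κ : Kernel α β, IsSFiniteKernel κ ∧ μ ⊗ₘ κ = ρ := by
  let f (a : α) : ℝ≥0 := (ρ.fst.rnDeriv μ a).toNNReal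
  have hf : Measurable f := by fun_prop
  have hdensity : μ.withDensity (fun a ↦ f a) = ρ.fst := by
    conv_rhs => rw [← Measure.withDensity_rnDeriv_eq _ _ h]
    refine withDensity_congr_ae ?_
    filter_upwards [ρ.fst.rnDeriv_lt_top μ] with a ha using ENNReal.coe_toNNReal ha.ne
  have : IsSFiniteKernel (ρ.condKernel.withDensity fun a _ ↦ f a) :=
    Kernel.IsSFiniteKernel.withDensity _ fun _ _ ↦ ENNReal.coe_ne_top
  refine ⟨ρ.condKernel.withDensity fun a _ ↦ f a, this, ?_⟩
  rw [Measure.compProd_withDensity (by fun_prop), withDensity_fst_compProd _ _ hf, hdensity,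
    ρ.disintegrate]

theorem exists_isSFiniteKernel_compProd_eq [MeasurableSpace β] [StandardBorelSpace β]
    [Nonempty β] {μ : Measure α} [SigmaFinite μ] {ρ : Measure (α × β)} [SFinite ρ]
    (h : ρ.fst ≪ μ) : ∃ κ : Kernel α β, IsSFiniteKernel κ ∧ μ ⊗ₘ κ = ρ := by
  have hfst (n : ℕ) : (sfiniteSeq ρ n).fst ≪ μ :=
    ((sfiniteSeq_le ρ n).absolutelyContinuous.map measurable_fst).trans h
  choose κ hκ hκρ using fun n ↦
    exists_isSFiniteKernel_compProd_eq_of_isFiniteMeasure (hfst n)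
  refine ⟨Kernel.sum κ, inferInstance, ?_⟩
  rw [Measure.compProd_sum_right]
  simp only [hκρ, sum_sfiniteSeq]

lemma measure_setOf_measure_le_le [MeasurableSpace β] [TopologicalSpace β] {m : Measure β}
    [m.InnerRegular] {J : β → Set β} {c : ℝ≥0∞}
    (hJ : ∀ K, IsCompact K → K.Nonempty → ∃ s ∈ K, K ⊆ J s)
    (hc : MeasurableSet {s | m (J s) ≤ c}) : m {s | m (J s) ≤ c} ≤ c := by
  rw [hc.measure_eq_iSup_isCompact]
  refine iSup₂_le fun K hK ↦ iSup_le fun hKc ↦ ?_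
  rcases K.eq_empty_or_nonempty with rfl | hne
  · simp
  · obtain ⟨s, hs, hKs⟩ := hJ K hKc hne
    exact (measure_mono hKs).trans (hK hs)

variable {μ : Measure α} {κ : Kernel α ℝ} {φ : ℝ → ℝ}

lemma measure_singleton_sq_le_sum (m : Measure ℝ) {s a : ℝ} (hs : s ∈ Ico a (a + 1)) (n : ℕ) :
    m {s} ^ 2 ≤ ∑ j ∈ Finset.range (n + 1),
      m (Ico (a + j * (1 / (n + 1))) (a + j * (1 / (n + 1)) + 1 / (n + 1))) ^ 2 := by
  have hn : (0 : ℝ) < n + 1 := by positivity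
  let j := ⌊(s - a) * (n + 1)⌋₊
  have hj : (j : ℝ) ≤ (s - a) * (n + 1) :=
    Nat.floor_le (mul_nonneg (sub_nonneg.2 hs.1) hn.le)
  have hj' : (s - a) * (n + 1) < j + 1 := Nat.lt_floor_add_one _
  have hsj : s ∈ Ico (a + j * (1 / (n + 1))) (a + j * (1 / (n + 1)) + 1 / (n + 1)) := by
    rw [mem_Ico, mul_one_div, add_assoc, ← add_div]
    exact ⟨le_sub_iff_add_le'.1 ((div_le_iff₀ hn).2 hj), sub_lt_iff_lt_add'.1
      ((lt_div_iff₀ hn).2 hj')⟩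
  have hjn : j ∈ Finset.range (n + 1) := by
    have : (j : ℝ) < n + 1 := by nlinarith [hs.2]
    exact Finset.mem_range.2 (by exact_mod_cast this)
  exact (pow_le_pow_left' (measure_mono (singleton_subset_iff.2 hsj)) 2).trans
    (Finset.single_le_sum_of_canonicallyOrdered (f := fun j : ℕ ↦
      m (Ico (a + j * (1 / (n + 1))) (a + j * (1 / (n + 1)) + 1 / (n + 1))) ^ 2) hjn)

theorem ae_nullSingletonClass_of_lintegral_sq_le
    (h : ∀ a δ, 0 < δ → ∫⁻ w, κ w (Ico a (a + δ)) ^ 2 ∂μ ≤ ENNReal.ofReal (δ * φ δ))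
    (hφ : Tendsto φ (𝓝[>] 0) (𝓝 0)) : ∀ᵐ w ∂μ, NullSingletonClass (κ w) := by
  have null (k : ℤ) : ∀ᵐ w ∂μ, ∀ s ∈ Ico (k : ℝ) (k + 1), κ w {s} = 0 := by
    let Φ (n : ℕ) (w : α) : ℝ≥0∞ := ∑ j ∈ Finset.range (n + 1),
      κ w (Ico (k + j * (1 / (n + 1))) (k + j * (1 / (n + 1)) + 1 / (n + 1) : ℝ)) ^ 2
    have hmeas (j n : ℕ) : Measurable fun w ↦
        κ w (Ico (k + j * (1 / (n + 1))) (k + j * (1 / (n + 1)) + 1 / (n + 1) : ℝ)) ^ 2 :=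
      (κ.measurable_coe measurableSet_Ico).pow_const 2
    have lintegral_le (n : ℕ) : ∫⁻ w, Φ n w ∂μ ≤ ENNReal.ofReal (φ (1 / (n + 1))) := by
      rw [lintegral_finsetSum _ fun j _ ↦ hmeas j n]
      refine (Finset.sum_le_sum fun j _ ↦ h _ _ Nat.one_div_pos_of_nat).trans_eq ?_
      rw [Finset.sum_const, Finset.card_range, nsmul_eq_mul, ← ENNReal.ofReal_natCast,
        ← ENNReal.ofReal_mul (by positivity)]
      congr 1
      push_cast
      field_simp
    have lintegral_iInf : ∫⁻ w, ⨅ n, Φ n w ∂μ = 0 := by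
      have hlim : Tendsto (fun n : ℕ ↦ ENNReal.ofReal (φ (1 / (n + 1)))) atTop (𝓝 0) := by
        rw [← ENNReal.ofReal_zero]
        exact ENNReal.tendsto_ofReal (hφ.comp (tendsto_nhdsWithin_iff.2
          ⟨tendsto_one_div_add_atTop_nhds_zero_nat, .of_forall fun n ↦ mem_Ioi.2
            Nat.one_div_pos_of_nat⟩))
      exact nonpos_iff_eq_zero.1 (ge_of_tendsto' hlim fun n ↦
        (lintegral_mono fun w ↦ iInf_le _ n).trans (lintegral_le n))
    rw [lintegral_eq_zero_iff (.iInf fun n ↦ Finset.measurable_sum _ fun j _ ↦ hmeas j n)]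
      at lintegral_iInf
    filter_upwards [lintegral_iInf] with w hw s hs
    have : κ w {s} ^ 2 ≤ ⨅ n, Φ n w := le_iInf (measure_singleton_sq_le_sum (κ w) hs)
    simpa [show ⨅ n, Φ n w = 0 from hw] using this
  filter_upwards [ae_all_iff.2 null] with w hw
  exact ⟨fun s ↦ hw ⌊s⌋ s ⟨Int.floor_le s, Int.lt_floor_add_one s⟩⟩

end KernelLemmas

section InducedMap

variable {X : Type*} {S : X → X} {D : Set X} {x : X} {k : ℕ}

/-- The points whose orbit under `S`, time `0` included, first enters `D` at time `k`. -/
def firstEntrySet (S : X → X) (D : Set X) (k : ℕ) : Set X :=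
  {x | S^[k] x ∈ D ∧ ∀ j < k, S^[j] x ∉ D}

/-- The first return time to `D` under `S` of a point of `D` (`0` if there is no return). It is
`0` off `D`, so that `x ↦ S^[returnTime S D x] x` is the induced map of `D`, extended by the
identity. -/
noncomputable def returnTime (S : X → X) (D : Set X) (x : X) : ℕ :=
  sInf {k | x ∈ D → 0 < k ∧ S^[k] x ∈ D}

lemma preimage_firstEntrySet_sdiff :
    S ⁻¹' firstEntrySet S D k \ D = firstEntrySet S D (k + 1) := by
  ext x
  simp only [firstEntrySet, Set.mem_sdiff, mem_preimage, mem_ofPred_eq, Nat.forall_lt_succ_left,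
    Function.iterate_succ_apply, Function.iterate_zero, id]
  tauto

lemma returnTime_of_notMem (hx : x ∉ D) : returnTime S D x = 0 := by
  simp [returnTime, hx]

lemma returnTime_eq_succ_iff :
    returnTime S D x = k + 1 ↔ x ∈ D ∧ S x ∈ firstEntrySet S D k := by
  by_cases hx : x ∈ D
  · have isLeast_iff : returnTime S D x = k + 1 ↔ IsLeast {j | 0 < j ∧ S^[j] x ∈ D} (k + 1) := by
      simp only [returnTime, hx, true_imp_iff]
      exact ⟨fun h ↦ h ▸ ⟨Nat.sInf_mem (Nat.nonempty_of_sInf_eq_succ h), fun _ ↦ Nat.sInf_le⟩,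
        IsLeast.csInf_eq⟩
    simp only [isLeast_iff, hx, true_and, firstEntrySet]
    refine ⟨fun h ↦ ⟨h.1.2, fun j hj hjD ↦ ?_⟩, fun h ↦ ⟨⟨k.succ_pos, h.1⟩, fun j hj ↦ ?_⟩⟩
    · exact absurd (h.2 ⟨j.succ_pos, hjD⟩) (by lia)
    · obtain ⟨i, rfl⟩ := Nat.exists_eq_succ_of_ne_zero hj.1.ne'
      exact Nat.succ_le_succ (not_lt.1 fun hi ↦ h.2 i hi hj.2)
  · simp [returnTime_of_notMem, hx]

variable [MeasurableSpace X]

lemma measurableSet_firstEntrySet (hS : Measurable S) (hD : MeasurableSet D) (k : ℕ) :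
    MeasurableSet (firstEntrySet S D k) := by
  simp only [firstEntrySet, Set.ofPred_and, Set.ofPred_forall]
  exact (hS.iterate k hD).inter
    (.iInter fun j ↦ .iInter fun _ ↦ (hS.iterate j hD).compl)

lemma measurable_returnTime (hS : Measurable S) (hD : MeasurableSet D) :
    Measurable (returnTime S D) := by
  have succ (k : ℕ) : MeasurableSet (returnTime S D ⁻¹' {k + 1}) := by
    convert hD.inter (hS (measurableSet_firstEntrySet hS hD k)) using 1
    ext x
    exact returnTime_eq_succ_iff
  have zero : returnTime S D ⁻¹' {0} = (⋃ k : ℕ, returnTime S D ⁻¹' {k + 1})ᶜ := by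
    ext x
    simpa using ⟨by lia, fun h ↦ Nat.eq_zero_of_not_pos fun h0 ↦ h (returnTime S D x - 1) (by lia)⟩
  refine measurable_to_countable' fun k ↦ ?_
  cases k with
  | zero => exact zero ▸ (MeasurableSet.iUnion succ).compl
  | succ k => exact succ k

variable {μ : Measure X}

lemma ae_returnTime_pos (hS : Conservative S μ) (hD : MeasurableSet D) :
    ∀ᵐ x ∂μ, x ∈ D → 0 < returnTime S D x := by
  filter_upwards [hS.ae_mem_imp_frequently_image_mem hD.nullMeasurableSet] with x hx hxD
  obtain ⟨k, hk, hkD⟩ := frequently_atTop.1 (hx hxD) 1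
  exact (Nat.sInf_mem (s := {k | x ∈ D → 0 < k ∧ S^[k] x ∈ D}) ⟨k, fun _ ↦ ⟨hk, hkD⟩⟩ hxD).1

/-- Kac's argument: the points that first enter `D` at time `k`, and do so in `F`, have as preimage
the points of `D` returning to `F` at time `k + 1` and those off `D` first entering `D` at time
`k + 1`, in `F`. -/
lemma tsum_measure_returnTime_eq_succ_le (hS : MeasurePreserving S μ μ) (hD : MeasurableSet D)
    {F : Set X} (hF : MeasurableSet F) :
    ∑' k, μ {x | returnTime S D x = k + 1 ∧ S^[k + 1] x ∈ F} ≤ μ (F ∩ D) := by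
  set entry : ℕ → Set X := fun k ↦ firstEntrySet S D k ∩ S^[k] ⁻¹' F with entry_def
  have measurableSet_entry (k : ℕ) : MeasurableSet (entry k) :=
    (measurableSet_firstEntrySet hS.measurable hD k).inter (hS.measurable.iterate k hF)
  have telescope (k : ℕ) :
      μ {x | returnTime S D x = k + 1 ∧ S^[k + 1] x ∈ F} + μ (entry (k + 1)) = μ (entry k) := by
    rw [← hS.measure_preimage (measurableSet_entry k).nullMeasurableSet,
      ← measure_inter_add_sdiff (S ⁻¹' entry k) hD]
    congr 1 <;> refine congrArg μ (Set.ext fun x ↦ ?_)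
    · simp only [returnTime_eq_succ_iff, entry_def, mem_ofPred_eq, mem_inter_iff, mem_preimage,
        Function.iterate_succ_apply]
      tauto
    · simp only [← preimage_firstEntrySet_sdiff, entry_def, mem_inter_iff, Set.mem_sdiff,
        mem_preimage, Function.iterate_succ_apply]
      tauto
  have partial_sum (n : ℕ) : ∑ k ∈ Finset.range n,
      μ {x | returnTime S D x = k + 1 ∧ S^[k + 1] x ∈ F} + μ (entry n) = μ (F ∩ D) := by
    induction n with
    | zero => simp [entry_def, firstEntrySet, inter_comm]
    | succ n ih => rw [Finset.sum_range_succ, add_assoc, telescope, ih]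
  rw [ENNReal.tsum_eq_iSup_nat]
  exact iSup_le fun n ↦ (partial_sum n) ▸ le_self_add

theorem measurePreserving_iterate_returnTime [IsFiniteMeasure μ] (hS : MeasurePreserving S μ μ)
    (hD : MeasurableSet D) : MeasurePreserving (fun x ↦ S^[returnTime S D x] x) μ μ := by
  have hm : Measurable fun x ↦ S^[returnTime S D x] x := by
    have : Measurable fun q : ℕ × X ↦ S^[q.1] q.2 :=
      measurable_from_prod_countable_right fun n ↦ hS.measurable.iterate n
    exact this.comp ((measurable_returnTime hS.measurable hD).prodMk measurable_id)
  refine ⟨hm, Measure.eq_of_le_of_measure_univ_eq (Measure.le_iff.2 fun F hF ↦ ?_)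
    (by simp [Measure.map_apply hm .univ])⟩
  have cover : (fun x ↦ S^[returnTime S D x] x) ⁻¹' F ≤ᵐ[μ]
      (F \ D ∪ ⋃ k, {x | returnTime S D x = k + 1 ∧ S^[k + 1] x ∈ F} : Set X) := by
    filter_upwards [ae_returnTime_pos hS.conservative hD] with x hpos (hxF : S^[_] x ∈ F)
    by_cases hxD : x ∈ D
    · obtain ⟨k, hk⟩ := Nat.exists_eq_succ_of_ne_zero (hpos hxD).ne'
      exact .inr (mem_iUnion.2 ⟨k, hk, by rwa [← Nat.succ_eq_add_one, ← hk]⟩)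
    · exact .inl ⟨by simpa [returnTime_of_notMem hxD] using hxF, hxD⟩
  calc μ.map (fun x ↦ S^[returnTime S D x] x) F
      = μ ((fun x ↦ S^[returnTime S D x] x) ⁻¹' F) := Measure.map_apply hm hF
    _ ≤ μ (F \ D) + ∑' k, μ {x | returnTime S D x = k + 1 ∧ S^[k + 1] x ∈ F} :=
      (measure_mono_ae cover).trans ((measure_union_le _ _).trans
        (add_le_add_right (measure_iUnion_le _) _))
    _ ≤ μ (F \ D) + μ (F ∩ D) := by gcongr; exact tsum_measure_returnTime_eq_succ_le hS hD hF
    _ = μ F := by rw [add_comm, measure_inter_add_sdiff _ hD]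

end InducedMap

section WaitingTime

/-- The time one has to wait after time `s` to collect mass `c` of the measure `m`; it is infinite
if this never happens. -/
noncomputable def waitTime (c : ℝ≥0∞) (m : Measure ℝ) (s : ℝ) : ℝ≥0∞ :=
  ⨅ (t : ℝ≥0) (_ : c ≤ m (Ioc s (s + t))), (t : ℝ≥0∞)

/-- The first time after `s` at which mass `c` of the measure `m` has been collected (`s` itself if
this never happens). -/
noncomputable def nextTime (c : ℝ≥0∞) (m : Measure ℝ) (s : ℝ) : ℝ :=
  s + (waitTime c m s).toReal

/-- A locally finite diffuse measure on the line whose mass is infinite at both ends, so that any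
finite mass is collected exactly, from any starting time and in both directions. -/
structure IsDiffuseClock (m : Measure ℝ) : Prop where
  isLocallyFinite : IsLocallyFiniteMeasure m
  nullSingleton : NullSingletonClass m
  measure_Ici : m (Ici 0) = ∞
  measure_Iic : m (Iic 0) = ∞

variable {c : ℝ≥0∞} {m : Measure ℝ} {s t : ℝ}

lemma waitTime_map_add_right (c : ℝ≥0∞) (m : Measure ℝ) (s r : ℝ) :
    waitTime c (m.map (· + r)) (s + r) = waitTime c m s := by
  have (t : ℝ≥0) : m.map (· + r) (Ioc (s + r) (s + r + t)) = m (Ioc s (s + t)) := by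
    rw [Measure.map_apply (by fun_prop) measurableSet_Ioc, preimage_add_const_Ioc]
    congr 2 <;> ring
  simp only [waitTime, this]

lemma measurable_waitTime {α β : Type*} [MeasurableSpace α] [MeasurableSpace β] (c : ℝ≥0∞)
    (κ : Kernel α ℝ) [IsSFiniteKernel κ] {f : β → α} {g : β → ℝ} (hf : Measurable f)
    (hg : Measurable g) : Measurable fun b ↦ waitTime c (κ (f b)) (g b) := by
  suffices Measurable fun p : α × ℝ ↦ waitTime c (κ p.1) p.2 by
    simpa only [Function.comp_def] using this.comp (hf.prodMk hg)
  have waitTime_lt_iff (p : α × ℝ) (x : ℝ≥0∞) : waitTime c (κ p.1) p.2 < x ↔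
      ∃ q : ℚ, ((q : ℝ).toNNReal : ℝ≥0∞) < x ∧
        c ≤ κ p.1 (Ioc p.2 (p.2 + (q : ℝ).toNNReal)) := by
    simp only [waitTime, iInf_lt_iff, exists_prop]
    refine ⟨fun ⟨t, hct, htx⟩ ↦ ?_, fun ⟨q, hqx, hcq⟩ ↦ ⟨_, hcq, hqx⟩⟩
    obtain ⟨q, -, htq, hqx⟩ := ENNReal.lt_iff_exists_rat_btwn.1 htx
    have htq : (t : ℝ) ≤ (q : ℝ).toNNReal := by exact_mod_cast htq.le
    exact ⟨q, hqx, hct.trans (by gcongr)⟩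
  refine measurable_of_Iio fun x ↦ ?_
  simp only [preimage, mem_Iio, waitTime_lt_iff, ofPred_exists, ofPred_and]
  refine .iUnion fun q ↦ (MeasurableSet.const _).inter (measurableSet_le measurable_const ?_)
  have window : MeasurableSet
      {z : (α × ℝ) × ℝ | z.1.2 < z.2 ∧ z.2 ≤ z.1.2 + (q : ℝ).toNNReal} := by
    measurability
  exact Kernel.measurable_kernel_prodMk_left (κ := κ.comap Prod.fst measurable_fst) window

/-- The mass between `0` and `t`, counted negatively when `t < 0`. -/
noncomputable def signedMass (m : Measure ℝ) (t : ℝ) : ℝ := ∫ _ in 0..t, (1 : ℝ) ∂m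

lemma measure_Ioc_eq_signedMass_sub [IsLocallyFiniteMeasure m] (s t : ℝ) :
    m (Ioc s t) = ENNReal.ofReal (signedMass m t - signedMass m s) := by
  have hint (a b : ℝ) : IntervalIntegrable (fun _ ↦ (1 : ℝ)) m a b := by simp
  rw [signedMass, signedMass, intervalIntegral.integral_interval_sub_left (hint _ _) (hint _ _),
    intervalIntegral.integral_const', smul_eq_mul, mul_one]
  rcases le_total s t with hst | hst
  · rw [Ioc_eq_empty_of_le hst, measureReal_empty, sub_zero,
      ofReal_measureReal measure_Ioc_lt_top.ne]
  · rw [Ioc_eq_empty_of_le hst, measureReal_empty, measure_empty, zero_sub,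
      ENNReal.ofReal_of_nonpos (neg_nonpos.2 measureReal_nonneg)]

lemma monotone_signedMass [IsLocallyFiniteMeasure m] : Monotone (signedMass m) := fun s t hst ↦ by
  have hint (a b : ℝ) : IntervalIntegrable (fun _ ↦ (1 : ℝ)) m a b := by simp
  rw [← sub_nonneg, signedMass, signedMass,
    intervalIntegral.integral_interval_sub_left (hint _ _) (hint _ _)]
  exact intervalIntegral.integral_nonneg hst fun _ _ ↦ zero_le_one

namespace IsDiffuseClock

lemma continuous_signedMass (hm : IsDiffuseClock m) : Continuous (signedMass m) := by
  have := hm.isLocallyFinite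
  have := hm.nullSingleton
  exact intervalIntegral.continuous_primitive (fun a b ↦ by simp) 0

lemma surjective_signedMass (hm : IsDiffuseClock m) : Function.Surjective (signedMass m) := by
  have := hm.isLocallyFinite
  have := hm.nullSingleton
  have zero : signedMass m 0 = 0 := intervalIntegral.integral_same
  refine hm.continuous_signedMass.surjective ?_ ?_
  · have h := tendsto_measure_Ico_atTop m 0
    simp only [hm.measure_Ici, Ico_ae_eq_Ioc.measure_eq, measure_Ioc_eq_signedMass_sub, zero,
      sub_zero] at h
    exact ENNReal.tendsto_ofReal_nhds_top.1 h
  · have h := tendsto_measure_Ioc_atBot m 0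
    simp only [hm.measure_Iic, measure_Ioc_eq_signedMass_sub, zero, zero_sub] at h
    exact tendsto_neg_atTop_iff.1 (ENNReal.tendsto_ofReal_nhds_top.1 h)

lemma exists_forall_signedMass_le_iff (hm : IsDiffuseClock m) (x : ℝ) :
    ∃ a, signedMass m a = x ∧ ∀ s, signedMass m s ≤ x ↔ s ≤ a := by
  have := hm.isLocallyFinite
  obtain ⟨a₀, rfl⟩ := hm.surjective_signedMass x
  obtain ⟨b, hb⟩ := hm.surjective_signedMass (signedMass m a₀ + 1)
  have hbdd : BddAbove {s | signedMass m s ≤ signedMass m a₀} :=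
    ⟨b, fun s hs ↦ (monotone_signedMass.reflect_lt
      (hs.trans_lt (hb ▸ lt_add_one _))).le⟩
  have hmem := (isClosed_le hm.continuous_signedMass continuous_const).csSup_mem
    ⟨a₀, le_refl (signedMass m a₀)⟩ hbdd
  refine ⟨_, le_antisymm hmem (monotone_signedMass
    (le_csSup hbdd (le_refl (signedMass m a₀)))), fun s ↦
    ⟨le_csSup hbdd, fun hs ↦ (monotone_signedMass hs).trans hmem⟩⟩

lemma map_signedMass (hm : IsDiffuseClock m) : m.map (signedMass m) = volume := by
  have := hm.isLocallyFinite
  refine (Measure.ext_of_Ioc _ _ fun x y _ ↦ ?_).symm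
  obtain ⟨a, rfl, ha⟩ := hm.exists_forall_signedMass_le_iff x
  obtain ⟨b, rfl, hb⟩ := hm.exists_forall_signedMass_le_iff y
  have : signedMass m ⁻¹' Ioc (signedMass m a) (signedMass m b) = Ioc a b := by
    ext s
    simp only [mem_preimage, mem_Ioc, hb, ← not_le, ha]
  rw [Measure.map_apply hm.continuous_signedMass.measurable measurableSet_Ioc, this,
    Real.volume_Ioc, measure_Ioc_eq_signedMass_sub]

lemma waitTime_le_iff (hm : IsDiffuseClock m) {t : ℝ≥0} :
    waitTime c m s ≤ t ↔ c ≤ m (Ioc s (s + t)) := by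
  have := hm.isLocallyFinite
  refine ⟨fun h ↦ ?_, fun h ↦ iInf₂_le t h⟩
  have lt_imp (u : ℝ≥0) (hu : t < u) : c ≤ m (Ioc s (s + u)) := by
    obtain ⟨v, hv⟩ := iInf_lt_iff.1 (h.trans_lt (ENNReal.coe_lt_coe.2 hu))
    obtain ⟨hcv, hvu⟩ := iInf_lt_iff.1 hv
    have : (v : ℝ) ≤ u := by exact_mod_cast hvu.le
    exact hcv.trans (by gcongr)
  have hcont : Continuous fun u : ℝ≥0 ↦ m (Ioc s (s + u)) := by
    have := hm.continuous_signedMass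
    simp only [measure_Ioc_eq_signedMass_sub]
    exact ENNReal.continuous_ofReal.comp (by fun_prop)
  exact ge_of_tendsto (hcont.tendsto t |>.mono_left nhdsWithin_le_nhds)
    (eventually_nhdsWithin_of_forall (s := Ioi t) lt_imp)

lemma waitTime_ne_top (hm : IsDiffuseClock m) (hc : c ≠ ∞) (s : ℝ) : waitTime c m s ≠ ∞ := by
  have := hm.isLocallyFinite
  lift c to ℝ≥0 using hc
  obtain ⟨u, hu⟩ := hm.surjective_signedMass (signedMass m s + c)
  refine ne_top_of_le_ne_top (ENNReal.coe_ne_top (r := (u - s).toNNReal))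
    (hm.waitTime_le_iff.2 ?_)
  rw [← ENNReal.ofReal_coe_nnreal, measure_Ioc_eq_signedMass_sub]
  refine ENNReal.ofReal_le_ofReal (le_sub_iff_add_le'.2 ?_)
  rw [← hu]
  exact monotone_signedMass (sub_le_iff_le_add'.1 (Real.le_coe_toNNReal _))

lemma waitTime_pos (hm : IsDiffuseClock m) (hc : c ≠ 0) (s : ℝ) : 0 < waitTime c m s :=
  pos_iff_ne_zero.2 fun h ↦ hc (by simpa using hm.waitTime_le_iff (t := 0).1 h.le)

lemma nextTime_le_iff (hm : IsDiffuseClock m) (hc : c ≠ 0) (hc' : c ≠ ∞) :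
    nextTime c m s ≤ t ↔ c ≤ m (Ioc s t) := by
  rcases le_or_gt s t with hst | hts
  · lift t - s to ℝ≥0 using sub_nonneg.2 hst with u hu
    rw [nextTime, ← le_sub_iff_add_le', ← hu, ← ENNReal.coe_toReal u, ENNReal.toReal_le_toReal
      (hm.waitTime_ne_top hc' s) ENNReal.coe_ne_top, hm.waitTime_le_iff, hu, add_sub_cancel]
  · have : t < nextTime c m s := hts.trans_le (le_add_of_nonneg_right ENNReal.toReal_nonneg)
    simp [this, Ioc_eq_empty_of_le hts.le, hc]

theorem map_nextTime (hm : IsDiffuseClock m) (hc : c ≠ 0) (hc' : c ≠ ∞) :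
    m.map (nextTime c m) = m := by
  have := hm.isLocallyFinite
  lift c to ℝ≥0 using hc'
  have le_iff (s t : ℝ) : nextTime c m s ≤ t ↔ signedMass m s ≤ signedMass m t - c := by
    rw [hm.nextTime_le_iff hc ENNReal.coe_ne_top, measure_Ioc_eq_signedMass_sub,
      ← ENNReal.ofReal_coe_nnreal, ENNReal.ofReal_le_ofReal_iff']
    have : 0 < (c : ℝ) := NNReal.coe_pos.2 (pos_iff_ne_zero.2 (by simpa using hc))
    grind
  have hmeas : Measurable (nextTime c m) := measurable_of_Iic fun t ↦ by
    simpa only [preimage, mem_Iic, le_iff] using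
      measurableSet_le hm.continuous_signedMass.measurable measurable_const
  refine (Measure.ext_of_Ioc _ _ fun a b _ ↦ ?_).symm
  have : nextTime c m ⁻¹' Ioc a b =
      signedMass m ⁻¹' Ioc (signedMass m a - c) (signedMass m b - c) := by
    ext s
    simp only [mem_preimage, mem_Ioc, le_iff, ← not_le]
  rw [Measure.map_apply hmeas measurableSet_Ioc, this,
    ← Measure.map_apply hm.continuous_signedMass.measurable measurableSet_Ioc, hm.map_signedMass,
    Real.volume_Ioc, measure_Ioc_eq_signedMass_sub, sub_sub_sub_cancel_right]

end IsDiffuseClock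

end WaitingTime

section PathSpace

/-- The space of continuous paths `ℝ → ℝ`, with the σ-algebra generated by the coordinates. -/
abbrev PathSpace : Type := {w : ℝ → ℝ // Continuous w}

namespace PathSpace

instance : CoeFun PathSpace fun _ ↦ ℝ → ℝ := ⟨Subtype.val⟩

/-- The coordinate process on path space. -/
abbrev coord (t : ℝ) (w : PathSpace) : ℝ := w t

/-- The path seen from time `s`, as a function of the elapsed time. -/
def shift (s : ℝ) (w : PathSpace) : PathSpace := ⟨fun t ↦ w (s + t), w.2.comp (by fun_prop)⟩

/-- The path with all its values raised by `x`. -/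
def translate (x : ℝ) (w : PathSpace) : PathSpace := ⟨fun t ↦ x + w t, w.2.const_add x⟩

/-- The path seen from the space-time point `(s, w s)`. -/
def recenter (s : ℝ) (w : PathSpace) : PathSpace := (w.shift s).translate (-w s)

lemma shift_shift (s t : ℝ) (w : PathSpace) : (w.shift s).shift t = w.shift (s + t) :=
  Subtype.ext (funext fun u ↦ by simp [shift, add_assoc])

lemma shift_zero (w : PathSpace) : w.shift 0 = w :=
  Subtype.ext (funext fun u ↦ by simp [shift])

lemma translate_translate (x y : ℝ) (w : PathSpace) :
    (w.translate x).translate y = w.translate (y + x) :=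
  Subtype.ext (funext fun u ↦ by simp [translate, add_assoc])

lemma shift_translate (s x : ℝ) (w : PathSpace) :
    (w.translate x).shift s = (w.shift s).translate x := rfl

variable {α : Type*} [MeasurableSpace α]

lemma measurable_of_apply {f : α → PathSpace} (h : ∀ t, Measurable fun a ↦ f a t) :
    Measurable f :=
  (measurable_pi_iff.2 h).subtype_mk

@[fun_prop]
lemma measurable_apply {f : α → PathSpace} {g : α → ℝ} (hf : Measurable f) (hg : Measurable g) :
    Measurable fun a ↦ f a (g a) :=
  (measurable_uncurry_of_continuous_of_measurable (u := coord) (fun w ↦ w.2)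
    fun t ↦ (measurable_pi_apply t).comp measurable_subtype_coe).comp (hg.prodMk hf)

@[fun_prop]
lemma measurable_shift {f : α → PathSpace} {g : α → ℝ} (hf : Measurable f) (hg : Measurable g) :
    Measurable fun a ↦ (f a).shift (g a) :=
  measurable_of_apply fun t ↦ (measurable_apply hf (hg.add_const t) :)

@[fun_prop]
lemma measurable_translate {f : α → PathSpace} {g : α → ℝ} (hf : Measurable f)
    (hg : Measurable g) : Measurable fun a ↦ (f a).translate (g a) :=
  measurable_of_apply fun _ ↦ hg.add (measurable_apply hf measurable_const)

lemma measurable_recenter (s : ℝ) : Measurable (recenter s) := by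
  unfold recenter
  fun_prop

lemma eq_of_map_val_eq {μ ν : Measure PathSpace}
    (h : μ.map Subtype.val = ν.map Subtype.val) : μ = ν := by
  ext _ ⟨u, hu, rfl⟩
  rw [← Measure.map_apply measurable_subtype_coe hu, h,
    Measure.map_apply measurable_subtype_coe hu]

end PathSpace

end PathSpace

section BrownianMotion

open PathSpace

variable {Ω Ω' : Type*} [MeasurableSpace Ω] [MeasurableSpace Ω'] {P : Measure Ω} {P' : Measure Ω'}
  {B : ℝ → Ω → ℝ} {B' : ℝ → Ω' → ℝ}

lemma exists_restrict_eq_comp_increments (I : Finset ℝ) :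
    ∃ (n : ℕ) (t : Fin (n + 1) → ℝ) (L : (Fin n → ℝ) → I → ℝ), StrictMono t ∧ Measurable L ∧
      ∀ f : ℝ → ℝ, f 0 = 0 → I.restrict f = L fun i ↦ f (t i.succ) - f (t i.castSucc) := by
  obtain ⟨n, hn⟩ := Nat.exists_eq_succ_of_ne_zero
    (Finset.card_pos.2 (Finset.insert_nonempty 0 I)).ne'
  let e := (insert 0 I).orderIsoOfFin hn
  let partialSum (d : Fin n → ℝ) : Fin (n + 1) → ℝ := Fin.cases 0 fun a ↦ ∑ i ∈ Finset.Iic a, d i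
  have measurable_partialSum (k) : Measurable (partialSum · k) := by
    cases k using Fin.cases with
    | zero => exact measurable_const
    | succ a => exact Finset.measurable_sum _ fun i _ ↦ measurable_pi_apply i
  have partialSum_sub (f : Fin (n + 1) → ℝ) (k) :
      partialSum (fun i ↦ f i.succ - f i.castSucc) k = f k - f 0 := by
    cases k using Fin.cases with
    | zero => simp [partialSum]
    | succ a => exact Fin.sum_Iic_sub a f
  refine ⟨n, fun k ↦ e k, fun d s ↦ partialSum d (e.symm ⟨s, Finset.mem_insert_of_mem s.2⟩) -
    partialSum d (e.symm ⟨0, Finset.mem_insert_self 0 I⟩), e.strictMono,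
    measurable_pi_iff.2 fun s ↦ (measurable_partialSum _).sub (measurable_partialSum _),
    fun f hf ↦ funext fun s ↦ ?_⟩
  simp only [partialSum_sub fun k ↦ f (e k), OrderIso.apply_symm_apply, hf]
  simp

namespace IsTwoSidedBM

lemma isProbabilityMeasure (hB : IsTwoSidedBM P B) : IsProbabilityMeasure P := by
  have : IsProbabilityMeasure (P.map fun ω ↦ B 1 ω - B 0 ω) := by
    rw [hB.gaussIncr 0 1 one_pos]
    infer_instance
  exact Measure.isProbabilityMeasure_of_map (fun ω ↦ B 1 ω - B 0 ω)

lemma congr (hB : IsTwoSidedBM P B) {C : ℝ → Ω → ℝ} (h : ∀ᵐ ω ∂P, ∀ t, B t ω = C t ω) :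
    IsTwoSidedBM P C where
  aemeas t := (hB.aemeas t).congr (h.mono fun ω hω ↦ hω t)
  cont := by
    filter_upwards [h, hB.cont] with ω hω hcont
    simpa only [hω] using hcont
  zero := by
    filter_upwards [h, hB.zero] with ω hω hzero
    rw [← hω, hzero]
  indepIncr n t ht := (hB.indepIncr n t ht).congr fun i ↦ h.mono fun ω hω ↦ by
    simp only [hω]
  gaussIncr s t hst := by
    rw [← hB.gaussIncr s t hst]
    exact Measure.map_congr (h.mono fun ω hω ↦ by simp only [hω])

lemma shift_sub (hB : IsTwoSidedBM P B) (s : ℝ) :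
    IsTwoSidedBM P (fun t ω ↦ B (s + t) ω - B s ω) where
  aemeas t := (hB.aemeas _).sub (hB.aemeas _)
  cont := hB.cont.mono fun ω h ↦ (h.comp (continuous_const_add s)).sub continuous_const
  zero := by simp
  indepIncr n t ht := by
    simpa using hB.indepIncr n (fun i ↦ s + t i) fun i j hij ↦ by simpa using ht hij
  gaussIncr u v huv := by
    simpa using hB.gaussIncr (s + u) (s + v) (by linarith)

lemma aemeasurable_sub (hB : IsTwoSidedBM P B) (s t : ℝ) :
    AEMeasurable (fun ω ↦ B t ω - B s ω) P :=
  (hB.aemeas t).sub (hB.aemeas s)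

lemma map_increments (hB : IsTwoSidedBM P B) {n : ℕ} {t : Fin (n + 1) → ℝ} (ht : StrictMono t) :
    P.map (fun ω (i : Fin n) ↦ B (t i.succ) ω - B (t i.castSucc) ω) =
      Measure.pi fun i : Fin n ↦ gaussianReal 0 (t i.succ - t i.castSucc).toNNReal := by
  have := hB.isProbabilityMeasure
  rw [(iIndepFun_iff_map_fun_eq_pi_map fun i ↦ hB.aemeasurable_sub _ _).1
    (hB.indepIncr n t ht.monotone)]
  exact congrArg Measure.pi (funext fun i ↦ hB.gaussIncr _ _ (ht Fin.castSucc_lt_succ))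

theorem map_restrict_eq (hB : IsTwoSidedBM P B) (hB' : IsTwoSidedBM P' B') (I : Finset ℝ) :
    P.map (fun ω ↦ I.restrict (B · ω)) = P'.map (fun ω ↦ I.restrict (B' · ω)) := by
  obtain ⟨n, t, L, ht, hL, hLf⟩ := exists_restrict_eq_comp_increments I
  rw [Measure.map_congr (hB.zero.mono fun ω hω ↦ hLf (B · ω) hω),
    Measure.map_congr (hB'.zero.mono fun ω hω ↦ hLf (B' · ω) hω)]
  have map_comp := AEMeasurable.map_map_of_aemeasurable hL.aemeasurable
    (aemeasurable_pi_lambda _ fun i : Fin n ↦ hB.aemeasurable_sub (t i.castSucc) (t i.succ))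
  have map_comp' := AEMeasurable.map_map_of_aemeasurable hL.aemeasurable
    (aemeasurable_pi_lambda _ fun i : Fin n ↦ hB'.aemeasurable_sub (t i.castSucc) (t i.succ))
  rw [hB.map_increments ht] at map_comp
  rw [hB'.map_increments ht] at map_comp'
  exact map_comp.symm.trans map_comp'

theorem eq_of_coord {W W' : Measure PathSpace} (hW : IsTwoSidedBM W coord)
    (hW' : IsTwoSidedBM W' coord) : W = W' := by
  have := hW.isProbabilityMeasure
  have := hW'.isProbabilityMeasure
  refine eq_of_map_val_eq ?_
  have h (I) := hW.map_restrict_eq hW' I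
  have hlim := isProjectiveLimit_map (X := coord) (P := W) measurable_subtype_coe.aemeasurable
  simp_rw [h] at hlim
  exact hlim.unique (isProjectiveLimit_map measurable_subtype_coe.aemeasurable)

end IsTwoSidedBM

lemma iIndepFun_map_iff {ι : Type*} {β : ι → Type*} [∀ i, MeasurableSpace (β i)] {π : Ω → Ω'}
    {f : ∀ i, Ω' → β i} (hπ : AEMeasurable π P) (hf : ∀ i, Measurable (f i)) :
    iIndepFun f (P.map π) ↔ iIndepFun (fun i ω ↦ f i (π ω)) P := by
  simp only [iIndepFun_iff_measure_inter_preimage_eq_mul]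
  refine forall₂_congr fun S sets ↦ forall_congr' fun hsets ↦ ?_
  rw [Measure.map_apply_of_aemeasurable hπ
    (S.measurableSet_biInter fun i hi ↦ hf i (hsets i hi)), preimage_iInter₂]
  refine Eq.congr_right (Finset.prod_congr rfl fun i hi ↦ ?_)
  exact Measure.map_apply_of_aemeasurable hπ (hf i (hsets i hi))

theorem isTwoSidedBM_map_iff {π : Ω → PathSpace} (hπ : Measurable π) :
    IsTwoSidedBM (P.map π) coord ↔ IsTwoSidedBM P fun t ω ↦ π ω t := by
  have coord_meas (t : ℝ) : Measurable (coord t) := measurable_apply measurable_id measurable_const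
  have indep {n : ℕ} (t : Fin (n + 1) → ℝ) := iIndepFun_map_iff (P := P) hπ.aemeasurable
    fun i : Fin n ↦ (coord_meas (t i.succ)).sub (coord_meas (t i.castSucc))
  have gauss (s t : ℝ) : (P.map π).map (fun w ↦ coord t w - coord s w) =
      P.map fun ω ↦ π ω t - π ω s := Measure.map_map ((coord_meas t).sub (coord_meas s)) hπ
  constructor
  · intro h
    exact ⟨fun t ↦ ((coord_meas t).comp hπ).aemeasurable, ae_of_all _ fun ω ↦ (π ω).2,
      ae_of_ae_map hπ.aemeasurable h.zero, fun n t ht ↦ (indep t).1 (h.indepIncr n t ht),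
      fun s t hst ↦ (gauss s t).symm.trans (h.gaussIncr s t hst)⟩
  · intro h
    exact ⟨fun t ↦ (coord_meas t).aemeasurable, ae_of_all _ fun w ↦ w.2,
      (ae_map_iff hπ.aemeasurable (coord_meas 0 (measurableSet_singleton 0))).2 h.zero,
      fun n t ht ↦ (indep t).2 (h.indepIncr n t ht),
      fun s t hst ↦ (gauss s t).trans (h.gaussIncr s t hst)⟩

namespace IsTwoSidedBM

lemma map_recenter {W : Measure PathSpace} (hW : IsTwoSidedBM W coord) (s : ℝ) :
    W.map (recenter s) = W := by
  refine eq_of_coord ((isTwoSidedBM_map_iff (measurable_recenter s)).2 ?_) hW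
  exact (hW.shift_sub s).congr (ae_of_all _ fun w t ↦ sub_eq_neg_add _ _)

theorem exists_measurable_path (hB : IsTwoSidedBM P B) :
    ∃ π : Ω → PathSpace, Measurable π ∧ ∀ᵐ ω ∂P, ∀ t, B t ω = π ω t := by
  obtain ⟨M, hMP, hM, hMB⟩ := (hB.cont.and (ae_all_iff.2 fun q : ℚ ↦
    (hB.aemeas q).ae_eq_mk)).exists_measurable_mem
  refine ⟨fun ω ↦ ⟨fun t ↦ M.indicator (B t) ω, ?_⟩, measurable_of_apply fun t ↦ ?_, ?_⟩
  · by_cases hω : ω ∈ M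
    · simpa [hω] using (hMB ω hω).1
    · simpa [hω] using continuous_const
  · obtain ⟨q, -, -, hq⟩ := Real.exists_seq_rat_strictMono_tendsto t
    refine measurable_of_tendsto_metrizable
      (fun n ↦ (hB.aemeas (q n)).measurable_mk.indicator hM) (tendsto_pi_nhds.2 fun ω ↦ ?_)
    by_cases hω : ω ∈ M
    · simpa [hω, ← (hMB ω hω).2, Function.comp_def] using ((hMB ω hω).1.tendsto t).comp hq
    · simp [hω]
  · filter_upwards [hMP] with ω hω t
    simp [hω]

end IsTwoSidedBM

end BrownianMotion

section StationaryMeasure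

open PathSpace

variable {W : Measure PathSpace} {F : PathSpace → ℝ≥0∞}

/-- The law under `W` of the path started according to Lebesgue measure. For a Brownian motion it
is infinite, but invariant under all the shifts. -/
noncomputable def stationaryMeasure (W : Measure PathSpace) : Measure PathSpace :=
  (volume.prod W).map fun q ↦ q.2.translate q.1

lemma lintegral_stationaryMeasure [SFinite W] (hF : Measurable F) :
    ∫⁻ w, F w ∂stationaryMeasure W = ∫⁻ w, (∫⁻ x, F (PathSpace.translate x w)) ∂W := by
  rw [stationaryMeasure, lintegral_map hF (by fun_prop), lintegral_prod_symm' _ (by fun_prop)]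

namespace IsTwoSidedBM

lemma lintegral_shift_neg (hW : IsTwoSidedBM W coord) (hF : Measurable F) (s : ℝ) :
    ∫⁻ v, F (v.shift (-s)) ∂W = ∫⁻ v, F (v.translate (-v s)) ∂W := by
  have hFs : Measurable fun v : PathSpace ↦ F (v.shift (-s)) := by fun_prop
  conv_lhs => rw [← hW.map_recenter s, lintegral_map hFs (measurable_recenter s)]
  simp [recenter, shift_translate, shift_shift, shift_zero]

theorem measurePreserving_shift_stationaryMeasure (hW : IsTwoSidedBM W coord) (s : ℝ) :
    MeasurePreserving (shift s) (stationaryMeasure W) (stationaryMeasure W) := by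
  have := hW.isProbabilityMeasure
  have hshift : Measurable (shift s) := by fun_prop
  refine ⟨hshift, Measure.ext_of_lintegral _ fun F hF ↦ ?_⟩
  have hFx : Measurable fun w ↦ ∫⁻ x, F (translate x w) :=
    Measurable.lintegral_prod_right' (f := fun q : PathSpace × ℝ ↦ F (q.1.translate q.2))
      (by fun_prop)
  rw [lintegral_map hF hshift,
    lintegral_stationaryMeasure (F := fun w ↦ F (w.shift s)) (by fun_prop),
    lintegral_stationaryMeasure hF]
  conv_rhs => rw [← hW.map_recenter s, lintegral_map hFx (measurable_recenter s)]
  refine lintegral_congr fun w ↦ ?_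
  simp only [recenter, translate_translate, shift_translate]
  exact (lintegral_add_right_eq_self (fun x ↦ F (translate x (shift s w))) (-w s)).symm

lemma stationaryMeasure_abs_zero_le (hW : IsTwoSidedBM W coord) (K : ℝ) :
    stationaryMeasure W {w | |w 0| ≤ K} = ENNReal.ofReal (2 * K) := by
  have := hW.isProbabilityMeasure
  have hK : MeasurableSet {w : PathSpace | |w 0| ≤ K} :=
    measurableSet_le (measurable_apply measurable_id measurable_const).abs measurable_const
  rw [← lintegral_indicator_one hK, lintegral_stationaryMeasure (measurable_one.indicator hK)]
  have inner : ∀ᵐ w ∂W, ∫⁻ x, {w : PathSpace | |w 0| ≤ K}.indicator 1 (translate x w) =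
      ENNReal.ofReal (2 * K) := by
    filter_upwards [hW.zero] with w hw
    have (x : ℝ) : {w : PathSpace | |w 0| ≤ K}.indicator (1 : PathSpace → ℝ≥0∞) (translate x w) =
        (Metric.closedBall (0 : ℝ) K).indicator 1 x := by
      simp [indicator, PathSpace.translate, show w 0 = 0 from hw]
    simp [this, lintegral_indicator_one Metric.isClosed_closedBall.measurableSet]
  rw [lintegral_congr_ae inner]
  simp

lemma sigmaFinite_stationaryMeasure (hW : IsTwoSidedBM W coord) :
    SigmaFinite (stationaryMeasure W) := by
  refine ⟨⟨⟨fun n : ℕ ↦ {w | |w 0| ≤ n}, fun _ ↦ trivial, fun n ↦ ?_, ?_⟩⟩⟩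
  · rw [hW.stationaryMeasure_abs_zero_le]
    exact ENNReal.ofReal_lt_top
  · exact eq_univ_of_forall fun w ↦ mem_iUnion.2 (exists_nat_ge |w 0|)

end IsTwoSidedBM

end StationaryMeasure

section GaussianBound

lemma setLIntegral_rpow_Icc_zero {r h : ℝ} (hr : -1 < r) (hh : 0 ≤ h) :
    ∫⁻ x in Icc 0 h, ENNReal.ofReal (x ^ r) = ENNReal.ofReal (h ^ (r + 1) / (r + 1)) := by
  rw [setLIntegral_congr Ioc_ae_eq_Icc.symm, ← ofReal_integral_eq_lintegral_ofReal
    ((intervalIntegral.intervalIntegrable_rpow' hr).1)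
    ((ae_restrict_mem measurableSet_Ioc).mono fun x hx ↦ Real.rpow_nonneg hx.1.le r),
    ← intervalIntegral.integral_of_le hh, integral_rpow (.inl hr), Real.zero_rpow (by linarith),
    sub_zero]

lemma setLIntegral_rpow_abs_sub_le {r a b s : ℝ} (hr : -1 < r) (hs : s ∈ Icc a b) :
    ∫⁻ u in Ico a b, ENNReal.ofReal (|u - s| ^ r) ≤
      ENNReal.ofReal (2 * (b - a) ^ (r + 1) / (r + 1)) := by
  let g : ℝ → ℝ≥0∞ := (Icc 0 (b - a)).indicator fun x ↦ ENNReal.ofReal (x ^ r)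
  have hg : Measurable g := Measurable.indicator (by fun_prop) measurableSet_Icc
  have le_add (u : ℝ) (hu : u ∈ Ico a b) :
      ENNReal.ofReal (|u - s| ^ r) ≤ g (u - s) + g (s - u) := by
    rcases le_total s u with hsu | hus
    · have : u - s ∈ Icc 0 (b - a) := ⟨sub_nonneg.2 hsu, sub_le_sub hu.2.le hs.1⟩
      rw [abs_of_nonneg this.1]
      exact le_add_right (indicator_of_mem this fun x ↦ ENNReal.ofReal (x ^ r)).ge
    · have : s - u ∈ Icc 0 (b - a) := ⟨sub_nonneg.2 hus, sub_le_sub hs.2 hu.1⟩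
      rw [abs_sub_comm, abs_of_nonneg this.1]
      exact le_add_left (indicator_of_mem this fun x ↦ ENNReal.ofReal (x ^ r)).ge
  calc ∫⁻ u in Ico a b, ENNReal.ofReal (|u - s| ^ r)
      ≤ ∫⁻ u, g (u - s) + g (s - u) :=
        (setLIntegral_mono (by fun_prop) le_add).trans (setLIntegral_le_lintegral _ _)
    _ = 2 * ∫⁻ x, g x := by
      rw [lintegral_add_left (by fun_prop), lintegral_sub_right_eq_self,
        lintegral_sub_left_eq_self, two_mul]
    _ = ENNReal.ofReal (2 * (b - a) ^ (r + 1) / (r + 1)) := by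
      rw [lintegral_indicator measurableSet_Icc, setLIntegral_rpow_Icc_zero hr
        (sub_nonneg.2 (hs.1.trans hs.2)), mul_div_assoc, ENNReal.ofReal_mul zero_le_two,
        ENNReal.ofReal_ofNat]

lemma gaussianReal_le_rpow_mul_volume (m : ℝ) {v : ℝ≥0} (hv : v ≠ 0) (S : Set ℝ) :
    gaussianReal m v S ≤ ENNReal.ofReal ((v : ℝ) ^ (-(1 / 2) : ℝ)) * volume S := by
  rw [gaussianReal_apply m hv, ← setLIntegral_const]
  refine lintegral_mono fun x ↦ ENNReal.ofReal_le_ofReal ?_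
  have hv0 : (0 : ℝ) < v := by positivity
  calc gaussianPDFReal m v x ≤ (√(2 * Real.pi * v))⁻¹ * 1 := by
        rw [gaussianPDFReal]
        gcongr
        exact Real.exp_le_one_iff.2 (div_nonpos_of_nonpos_of_nonneg (by nlinarith) (by positivity))
    _ ≤ (√v)⁻¹ := by
      rw [mul_one]
      gcongr
      nlinarith [Real.pi_gt_three]
    _ = (v : ℝ) ^ (-(1 / 2) : ℝ) := by rw [Real.rpow_neg hv0.le, Real.sqrt_eq_rpow]

namespace IsTwoSidedBM

variable {Ω : Type*} [MeasurableSpace Ω] {P : Measure Ω} {B : ℝ → Ω → ℝ}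

lemma map_sub (hB : IsTwoSidedBM P B) (s t : ℝ) :
    P.map (fun ω ↦ B t ω - B s ω) = gaussianReal 0 (Real.nnabs (t - s)) := by
  have := hB.isProbabilityMeasure
  rcases lt_trichotomy s t with hst | rfl | hts
  · rw [hB.gaussIncr s t hst, Real.nnabs_of_nonneg (sub_nonneg.2 hst.le)]
  · simp
  · have hneg := gaussianReal_map_neg (μ := 0) (v := (s - t).toNNReal)
    rw [← hB.gaussIncr t s hts, AEMeasurable.map_map_of_aemeasurable (by fun_prop)
      (hB.aemeasurable_sub t s), neg_zero,
      ← Real.nnabs_of_nonneg (sub_nonneg.2 hts.le)] at hneg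
    rw [show Real.nnabs (t - s) = Real.nnabs (s - t) from NNReal.eq (by simp [abs_sub_comm]),
      ← hneg]
    exact congrArg (P.map ·) (funext fun ω ↦ (neg_sub _ _).symm)

lemma measure_sub_mem_le (hB : IsTwoSidedBM P B) {s t : ℝ} (hst : t ≠ s) {S : Set ℝ}
    (hS : MeasurableSet S) :
    P {ω | B t ω - B s ω ∈ S} ≤ ENNReal.ofReal (|t - s| ^ (-(1 / 2) : ℝ)) * volume S := by
  have := gaussianReal_le_rpow_mul_volume 0 (v := Real.nnabs (t - s))
    (by simpa [sub_eq_zero] using hst) S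
  rwa [← hB.map_sub, Measure.map_apply_of_aemeasurable (hB.aemeasurable_sub s t) hS] at this

end IsTwoSidedBM

end GaussianBound

section OccupationDensity

open PathSpace

variable {W : Measure PathSpace} {I : Set ℝ} {a b s : ℝ}

/-- The density at level `0` of the amount of time in `I` that the path spends at the various
levels, as a lower symmetric derivative: this is the local time at `0` accumulated during `I`. -/
noncomputable def occupationDensity (I : Set ℝ) (w : PathSpace) : ℝ≥0∞ :=
  liminf (fun n : ℕ ↦ volume.restrict I (w ⁻¹' Metric.closedBall 0 (1 / (n + 1))) /
    volume (Metric.closedBall (0 : ℝ) (1 / (n + 1)))) atTop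

lemma measurable_occupationDensity (I : Set ℝ) : Measurable (occupationDensity I) := by
  refine .liminf fun n ↦ .div_const ?_ _
  have : MeasurableSet {q : PathSpace × ℝ | q.1 q.2 ∈ Metric.closedBall 0 (1 / (n + 1) : ℝ)} :=
    measurable_apply measurable_fst measurable_snd Metric.isClosed_closedBall.measurableSet
  exact measurable_measure_prodMk_left this

lemma occupationDensity_shift (hI : MeasurableSet I) (r : ℝ) (w : PathSpace) :
    occupationDensity ((r + ·) ⁻¹' I) (w.shift r) = occupationDensity I w := by
  have hmp := (measurePreserving_add_left (volume : Measure ℝ) r).restrict_preimage hI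
  refine congrArg (liminf · atTop) (funext fun n ↦ congrArg (· / _) ?_)
  exact hmp.measure_preimage
    (w.2.measurable Metric.isClosed_closedBall.measurableSet).nullMeasurableSet

lemma occupationDensity_translate_neg (I : Set ℝ) (w : PathSpace) (x : ℝ) :
    occupationDensity I (w.translate (-x)) =
      liminf (fun n : ℕ ↦ (volume.restrict I).map w (Metric.closedBall x (1 / (n + 1))) /
        volume (Metric.closedBall x (1 / (n + 1)))) atTop := by
  refine congrArg (liminf · atTop) (funext fun n ↦ ?_)
  have : w ⁻¹' Metric.closedBall x (1 / (n + 1)) =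
      w.translate (-x) ⁻¹' Metric.closedBall 0 (1 / (n + 1)) := by
    ext s
    simp [PathSpace.translate, Real.dist_eq, sub_eq_neg_add]
  rw [Measure.map_apply w.2.measurable Metric.isClosed_closedBall.measurableSet, this,
    Real.volume_closedBall, Real.volume_closedBall]

namespace IsTwoSidedBM

lemma lintegral_restrict_preimage_translate_le (hW : IsTwoSidedBM W coord) (hs : s ∈ Icc a b)
    {S : Set ℝ} (hS : MeasurableSet S) :
    ∫⁻ v, volume.restrict (Ico a b) (v.translate (-v s) ⁻¹' S) ∂W ≤
      ENNReal.ofReal (4 * (b - a) ^ (1 / 2 : ℝ)) * volume S := by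
  have := hW.isProbabilityMeasure
  have hmeas : MeasurableSet {q : PathSpace × ℝ | q.1 q.2 - q.1 s ∈ S} :=
    ((measurable_apply measurable_fst measurable_snd).sub
      (measurable_apply measurable_fst measurable_const)) hS
  calc ∫⁻ v, volume.restrict (Ico a b) (v.translate (-v s) ⁻¹' S) ∂W
      = ∫⁻ u in Ico a b, W {v | v u - v s ∈ S} := by
        simp only [PathSpace.translate, preimage, ← sub_eq_neg_add]
        exact (Measure.prod_apply hmeas).symm.trans (Measure.prod_apply_symm hmeas)
    _ ≤ ∫⁻ u in Ico a b, ENNReal.ofReal (|u - s| ^ (-(1 / 2) : ℝ)) * volume S :=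
      lintegral_mono_ae <| ae_restrict_of_ae <| (Measure.ae_ne volume s).mono fun u hu ↦
        hW.measure_sub_mem_le hu hS
    _ ≤ ENNReal.ofReal (4 * (b - a) ^ (1 / 2 : ℝ)) * volume S := by
      rw [lintegral_mul_const _ (by fun_prop)]
      gcongr
      refine (setLIntegral_rpow_abs_sub_le (by norm_num) hs).trans
        (ENNReal.ofReal_le_ofReal (le_of_eq ?_))
      rw [show (-(1 / 2) + 1 : ℝ) = 1 / 2 by norm_num]
      ring

lemma lintegral_occupationDensity_translate_le (hW : IsTwoSidedBM W coord) (hs : s ∈ Icc a b) :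
    ∫⁻ v, occupationDensity (Ico a b) (v.translate (-v s)) ∂W ≤
      ENNReal.ofReal (4 * (b - a) ^ (1 / 2 : ℝ)) := by
  have measurable_ratio (n : ℕ) : Measurable fun v : PathSpace ↦
      volume.restrict (Ico a b) (v.translate (-v s) ⁻¹' Metric.closedBall 0 (1 / (n + 1))) := by
    have : MeasurableSet {q : PathSpace × ℝ | q.1.translate (-q.1 s) q.2 ∈
        Metric.closedBall 0 (1 / (n + 1) : ℝ)} :=
      measurable_apply (by fun_prop) measurable_snd Metric.isClosed_closedBall.measurableSet
    exact measurable_measure_prodMk_left this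
  refine (lintegral_liminf_le fun n ↦ (measurable_ratio n).div_const _).trans
    (liminf_le_of_frequently_le' (.of_forall fun n ↦ ?_))
  simp only [div_eq_mul_inv _ (volume _)]
  rw [lintegral_mul_const _ (measurable_ratio n), ← div_eq_mul_inv]
  exact ENNReal.div_le_of_le_mul
    (hW.lintegral_restrict_preimage_translate_le hs Metric.isClosed_closedBall.measurableSet)

lemma withDensity_occupationDensity_translate_neg (hW : IsTwoSidedBM W coord) (a b : ℝ) :
    ∀ᵐ v ∂W, volume.withDensity
      (fun x ↦ occupationDensity (Ico a b) (PathSpace.translate (-x) v)) =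
        (volume.restrict (Ico a b)).map v := by
  have := hW.isProbabilityMeasure
  have hmeas : Measurable fun q : PathSpace × ℝ ↦
      occupationDensity (Ico a b) (q.1.translate (-q.1 q.2)) :=
    (measurable_occupationDensity _).comp (measurable_translate measurable_fst
      (measurable_apply measurable_fst measurable_snd).neg)
  have finite : ∀ᵐ q ∂W.prod (volume.restrict (Ico a b)),
      occupationDensity (Ico a b) (q.1.translate (-q.1 q.2)) < ∞ := by
    refine ae_lt_top hmeas (ne_top_of_le_ne_top (b := ENNReal.ofReal (4 * (b - a) ^ (1 / 2 : ℝ)) *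
      volume (Ico a b)) (ENNReal.mul_ne_top ENNReal.ofReal_ne_top measure_Ico_lt_top.ne) ?_)
    rw [lintegral_prod_symm' _ hmeas, ← setLIntegral_const]
    exact setLIntegral_mono measurable_const fun s hs ↦
      hW.lintegral_occupationDensity_translate_le (Ico_subset_Icc_self hs)
  filter_upwards [Measure.ae_ae_of_ae_prod finite] with v hv
  have : IsFiniteMeasure ((volume.restrict (Ico a b)).map v) := Measure.isFiniteMeasure_map _ _
  have hℓ : Measurable fun x ↦ occupationDensity (Ico a b) (PathSpace.translate (-x) v) :=
    (measurable_occupationDensity _).comp (by fun_prop)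
  have finite_map : ∀ᵐ x ∂(volume.restrict (Ico a b)).map v,
      occupationDensity (Ico a b) (PathSpace.translate (-x) v) ≠ ∞ :=
    (ae_map_iff v.2.aemeasurable (hℓ (measurableSet_singleton ∞).compl)).2
      (hv.mono fun s ↦ ne_of_lt)
  simp only [occupationDensity_translate_neg] at finite_map ⊢
  exact withDensity_liminf_closedBall_div (tendsto_nhdsWithin_iff.2
    ⟨tendsto_one_div_add_atTop_nhds_zero_nat, .of_forall fun n ↦ mem_Ioi.2
      Nat.one_div_pos_of_nat⟩) finite_map

theorem withDensity_occupationDensity (hW : IsTwoSidedBM W coord) (a b : ℝ) :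
    (stationaryMeasure W).withDensity (occupationDensity (Ico a b)) =
      ((volume.restrict (Ico a b)).prod W).map fun q ↦ q.2.shift (-q.1) := by
  have := hW.isProbabilityMeasure
  have hℓ := measurable_occupationDensity (Ico a b)
  refine Measure.ext_of_lintegral _ fun F hF ↦ Eq.symm ?_
  have hFv (v : PathSpace) : Measurable fun x ↦ F (PathSpace.translate (-x) v) := by fun_prop
  rw [lintegral_map hF (by fun_prop), lintegral_prod _ (by fun_prop),
    lintegral_withDensity_eq_lintegral_mul _ hℓ hF, lintegral_stationaryMeasure (hℓ.mul hF)]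
  have hmeas : Measurable fun q : PathSpace × ℝ ↦ F (q.1.translate (-q.1 q.2)) :=
    hF.comp (measurable_translate measurable_fst
      (measurable_apply measurable_fst measurable_snd).neg)
  calc ∫⁻ s in Ico a b, ∫⁻ v, F (v.shift (-s)) ∂W
      = ∫⁻ s in Ico a b, ∫⁻ v, F (v.translate (-v s)) ∂W := by
        simp only [hW.lintegral_shift_neg hF]
    _ = ∫⁻ v, (∫⁻ s in Ico a b, F (v.translate (-v s))) ∂W :=
        lintegral_lintegral_swap (hmeas.comp measurable_swap).aemeasurable
    _ = ∫⁻ v, (∫⁻ x, occupationDensity (Ico a b) (PathSpace.translate x v) *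
          F (PathSpace.translate x v)) ∂W := by
        refine lintegral_congr_ae ?_
        filter_upwards [hW.withDensity_occupationDensity_translate_neg a b] with v hv
        rw [← lintegral_map (μ := volume.restrict (Ico a b)) (hFv v) v.2.measurable, ← hv,
          lintegral_withDensity_eq_lintegral_mul _ (by fun_prop) (hFv v)]
        exact lintegral_neg_eq_self (μ := volume) (fun x ↦ occupationDensity (Ico a b)
          (PathSpace.translate x v) * F (PathSpace.translate x v))

lemma lintegral_sq_occupationDensity_le (hW : IsTwoSidedBM W coord) (a b : ℝ) :
    ∫⁻ w, occupationDensity (Ico a b) w ^ 2 ∂stationaryMeasure W ≤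
      ENNReal.ofReal (4 * (b - a) ^ (1 / 2 : ℝ)) * ENNReal.ofReal (b - a) := by
  have := hW.isProbabilityMeasure
  have hℓ := measurable_occupationDensity (Ico a b)
  calc ∫⁻ w, occupationDensity (Ico a b) w ^ 2 ∂stationaryMeasure W
      = ∫⁻ w, occupationDensity (Ico a b) w
          ∂(stationaryMeasure W).withDensity (occupationDensity (Ico a b)) := by
        simp only [sq]
        exact (lintegral_withDensity_eq_lintegral_mul _ hℓ hℓ).symm
    _ = ∫⁻ s in Ico a b, ∫⁻ v, occupationDensity (Ico a b) (v.translate (-v s)) ∂W := by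
        rw [hW.withDensity_occupationDensity, lintegral_map hℓ (by fun_prop),
          lintegral_prod _ (by fun_prop)]
        simp only [hW.lintegral_shift_neg hℓ]
    _ ≤ ∫⁻ _ in Ico a b, ENNReal.ofReal (4 * (b - a) ^ (1 / 2 : ℝ)) :=
        setLIntegral_mono measurable_const fun s hs ↦
          hW.lintegral_occupationDensity_translate_le (Ico_subset_Icc_self hs)
    _ = _ := by rw [setLIntegral_const, Real.volume_Ico]

lemma map_shift_neg_absolutelyContinuous (hW : IsTwoSidedBM W coord) :
    (volume.prod W).map (fun q : ℝ × PathSpace ↦ q.2.shift (-q.1)) ≪ stationaryMeasure W := by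
  have := hW.isProbabilityMeasure
  have hshift : Measurable fun q : ℝ × PathSpace ↦ q.2.shift (-q.1) := by fun_prop
  refine .mk fun E hE hE0 ↦ ?_
  have null (n : ℕ) : ((volume.restrict (Ico (-n : ℝ) n)).prod W)
      ((fun q ↦ q.2.shift (-q.1)) ⁻¹' E) = 0 := by
    rw [← Measure.map_apply hshift hE, ← hW.withDensity_occupationDensity]
    exact withDensity_absolutelyContinuous _ _ hE0
  rw [Measure.map_apply hshift hE]
  refine measure_mono_null (t := ⋃ n : ℕ, (fun q : ℝ × PathSpace ↦ q.2.shift (-q.1)) ⁻¹' E ∩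
    (Ico (-n : ℝ) n ×ˢ univ)) (fun q hq ↦ ?_) (measure_iUnion_null fun n ↦ ?_)
  · obtain ⟨n, hn⟩ := exists_nat_gt |q.1|
    exact mem_iUnion.2 ⟨n, hq, ⟨(abs_lt.1 hn).1.le, (abs_lt.1 hn).2⟩, trivial⟩
  · rw [← Measure.restrict_apply (hshift hE), ← Measure.prod_restrict, Measure.restrict_univ, null]

end IsTwoSidedBM

end OccupationDensity

section LocalTime

open PathSpace

variable {W : Measure PathSpace} {L : Kernel PathSpace ℝ}

/-- The infinite measure under which a pair `(w, s)` is a path of law `W` whose origin has been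
moved to a time `s` spread according to Lebesgue measure. In Palm theory this is the Campbell
measure whose Palm measure is `W`. -/
noncomputable def campbellMeasure (W : Measure PathSpace) : Measure (PathSpace × ℝ) :=
  (volume.prod W).map fun q ↦ (q.2.shift (-q.1), q.1)

/-- A kernel giving the local time at `0` of the paths, as a random measure on the time axis. -/
def IsLocalTime (W : Measure PathSpace) (L : Kernel PathSpace ℝ) : Prop :=
  stationaryMeasure W ⊗ₘ L = campbellMeasure W

lemma campbellMeasure_inter_preimage_snd [SFinite W] {A : Set (PathSpace × ℝ)} {I : Set ℝ}
    (hA : MeasurableSet A) (hI : MeasurableSet I) :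
    campbellMeasure W (A ∩ Prod.snd ⁻¹' I) =
      (volume.restrict I).prod W ((fun q ↦ (q.2.shift (-q.1), q.1)) ⁻¹' A) := by
  have hΦ : Measurable fun q : ℝ × PathSpace ↦ (q.2.shift (-q.1), q.1) := by fun_prop
  rw [campbellMeasure, Measure.map_apply hΦ (hA.inter (measurable_snd hI)),
    Measure.restrict_prod_eq_prod_univ, prod_univ]
  exact (Measure.restrict_apply (hΦ hA)).symm

namespace IsTwoSidedBM

theorem exists_isLocalTime (hW : IsTwoSidedBM W coord) :
    ∃ L : Kernel PathSpace ℝ, IsSFiniteKernel L ∧ IsLocalTime W L := by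
  have := hW.isProbabilityMeasure
  have := hW.sigmaFinite_stationaryMeasure
  have : SFinite (campbellMeasure W) := by unfold campbellMeasure; infer_instance
  refine exists_isSFiniteKernel_compProd_eq ?_
  rw [campbellMeasure, Measure.fst, Measure.map_map measurable_fst (by fun_prop)]
  exact hW.map_shift_neg_absolutelyContinuous

lemma ae_prod_shift_neg (hW : IsTwoSidedBM W coord) {p : PathSpace → Prop}
    (h : ∀ᵐ w ∂stationaryMeasure W, p w) :
    ∀ᵐ q ∂(volume : Measure ℝ).prod W, p (q.2.shift (-q.1)) :=
  ae_of_ae_map (by fun_prop) (hW.map_shift_neg_absolutelyContinuous.ae_le h)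

lemma ae_ae_shift_neg (hW : IsTwoSidedBM W coord) {p : PathSpace → Prop}
    (h : ∀ᵐ w ∂stationaryMeasure W, p w) : ∀ᵐ v ∂W, ∀ᵐ s : ℝ, p (v.shift (-s)) := by
  have := hW.isProbabilityMeasure
  refine Measure.ae_ae_of_ae_prod (p := fun q : PathSpace × ℝ ↦ p (q.1.shift (-q.2))) ?_
  exact Measure.measurePreserving_swap.quasiMeasurePreserving.ae (hW.ae_prod_shift_neg h)

lemma ae_ae_shift (hW : IsTwoSidedBM W coord) {p : PathSpace → Prop}
    (h : ∀ᵐ w ∂stationaryMeasure W, p w) : ∀ᵐ w ∂stationaryMeasure W, ∀ᵐ r : ℝ, p (w.shift r) := by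
  have := hW.sigmaFinite_stationaryMeasure
  obtain ⟨S, hS, hS_meas, hp⟩ := h.exists_measurable_mem
  have hmeas : MeasurableSet {q : PathSpace × ℝ | q.1.shift q.2 ∈ S} :=
    (measurable_shift measurable_fst measurable_snd) hS_meas
  have : ∀ᵐ w ∂stationaryMeasure W, ∀ᵐ r : ℝ, w.shift r ∈ S :=
    (Measure.ae_ae_comm hmeas).2 (.of_forall fun r ↦
      (hW.measurePreserving_shift_stationaryMeasure r).quasiMeasurePreserving.ae hS)
  exact this.mono fun w hw ↦ hw.mono fun r ↦ hp _

end IsTwoSidedBM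

namespace IsLocalTime

variable [IsSFiniteKernel L]

lemma ae_apply_Ico (hL : IsLocalTime W L) (hW : IsTwoSidedBM W coord) (a b : ℝ) :
    ∀ᵐ w ∂stationaryMeasure W, L w (Ico a b) = occupationDensity (Ico a b) w := by
  have := hW.isProbabilityMeasure
  have := hW.sigmaFinite_stationaryMeasure
  refine (withDensity_eq_iff_of_sigmaFinite (L.measurable_coe measurableSet_Ico).aemeasurable
    (measurable_occupationDensity _).aemeasurable).1 ?_
  ext E hE
  rw [hW.withDensity_occupationDensity, withDensity_apply _ hE,
    ← Measure.compProd_apply_prod hE measurableSet_Ico, hL, Set.prod_eq,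
    campbellMeasure_inter_preimage_snd (measurable_fst hE) measurableSet_Ico,
    Measure.map_apply (by fun_prop) hE]
  rfl

lemma ae_isLocallyFiniteMeasure (hL : IsLocalTime W L) (hW : IsTwoSidedBM W coord) :
    ∀ᵐ w ∂stationaryMeasure W, IsLocallyFiniteMeasure (L w) := by
  have := hW.isProbabilityMeasure
  have finite (n : ℕ) : ∀ᵐ w ∂stationaryMeasure W, L w (Ico (-n) n) < ∞ := by
    have : ∫⁻ w, occupationDensity (Ico (-n) n) w ∂stationaryMeasure W ≠ ∞ := by
      rw [← setLIntegral_univ, ← withDensity_apply _ .univ, hW.withDensity_occupationDensity]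
      exact measure_ne_top _ _
    filter_upwards [hL.ae_apply_Ico hW (-n) n,
      ae_lt_top (measurable_occupationDensity _) this] with w hw hlt using hw ▸ hlt
  filter_upwards [ae_all_iff.2 finite] with w hw
  refine ⟨fun x ↦ ?_⟩
  obtain ⟨n, hn⟩ := exists_nat_gt |x|
  exact ⟨Ico (-n) n, Ico_mem_nhds (abs_lt.1 hn).1 (abs_lt.1 hn).2, hw n⟩

lemma ae_nullSingletonClass (hL : IsLocalTime W L) (hW : IsTwoSidedBM W coord) :
    ∀ᵐ w ∂stationaryMeasure W, NullSingletonClass (L w) := by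
  refine ae_nullSingletonClass_of_lintegral_sq_le (φ := fun δ ↦ 4 * δ ^ (1 / 2 : ℝ))
    (fun a δ hδ ↦ ?_) ?_
  · rw [lintegral_congr_ae ((hL.ae_apply_Ico hW a (a + δ)).mono fun w hw ↦ congrArg (· ^ 2) hw),
      mul_comm, ENNReal.ofReal_mul (by positivity)]
    simpa using hW.lintegral_sq_occupationDensity_le a (a + δ)
  · have := (Real.continuousAt_rpow_const 0 (1 / 2) (.inr (by norm_num))).tendsto.const_mul 4
    rw [Real.zero_rpow (by norm_num), mul_zero] at this
    exact this.mono_left nhdsWithin_le_nhds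

lemma ae_apply_shift (hL : IsLocalTime W L) (hW : IsTwoSidedBM W coord) (a b : ℝ) :
    ∀ᵐ w ∂stationaryMeasure W, ∀ᵐ r : ℝ, L (w.shift r) (Ico a b) = L w (Ico (a + r) (b + r)) := by
  have := hW.sigmaFinite_stationaryMeasure
  have hmeas : Measurable fun q : PathSpace × ℝ ↦ L q.1 (Ico (a + q.2) (b + q.2)) := by
    have : MeasurableSet {z : (PathSpace × ℝ) × ℝ | a + z.1.2 ≤ z.2 ∧ z.2 < b + z.1.2} := by
      measurability
    exact Kernel.measurable_kernel_prodMk_left (κ := L.comap Prod.fst measurable_fst) this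
  have hmeas' : Measurable fun q : PathSpace × ℝ ↦ L (q.1.shift q.2) (Ico a b) :=
    (L.measurable_coe measurableSet_Ico).comp (by fun_prop)
  have hEq : MeasurableSet {q : PathSpace × ℝ | L (q.1.shift q.2) (Ico a b) =
      L q.1 (Ico (a + q.2) (b + q.2))} := measurableSet_eq_fun hmeas' hmeas
  refine (Measure.ae_ae_comm hEq).2 (.of_forall fun r ↦ ?_)
  filter_upwards [hL.ae_apply_Ico hW (a + r) (b + r),
    (hW.measurePreserving_shift_stationaryMeasure r).quasiMeasurePreserving.ae
      (hL.ae_apply_Ico hW a b)] with w hw hwr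
  rw [hwr, hw, ← occupationDensity_shift measurableSet_Ico r w]
  simp

lemma ae_shift_eq (hL : IsLocalTime W L) (hW : IsTwoSidedBM W coord) :
    ∀ᵐ w ∂stationaryMeasure W, ∀ᵐ r : ℝ, L (w.shift r) = (L w).map (· - r) := by
  filter_upwards [ae_all_iff.2 fun a : ℚ ↦ ae_all_iff.2 fun b : ℚ ↦ hL.ae_apply_shift hW a b,
    hL.ae_nullSingletonClass hW, hW.ae_ae_shift (hL.ae_nullSingletonClass hW),
    hW.ae_ae_shift (hL.ae_isLocallyFiniteMeasure hW)] with w hIco _ hnull hfinite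
  filter_upwards [ae_all_iff.2 fun a ↦ ae_all_iff.2 fun b ↦ hIco a b, hnull, hfinite]
    with r hIco _ _
  refine Real.measure_ext_Ioo_rat fun a b ↦ ?_
  rw [Measure.map_apply (by fun_prop) measurableSet_Ioo, preimage_sub_const_Ioo,
    Ioo_ae_eq_Ico.measure_eq, hIco, Ioo_ae_eq_Ico.measure_eq]

end IsLocalTime

end LocalTime

section Translation

variable {α β : Type*} [MeasurableSpace α] [MeasurableSpace β] {m : Measure α}

lemma isLocallyFiniteMeasure_map_homeomorph [TopologicalSpace α] [BorelSpace α]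
    [TopologicalSpace β] [BorelSpace β] [IsLocallyFiniteMeasure m] (e : α ≃ₜ β) :
    IsLocallyFiniteMeasure (m.map e) := by
  refine ⟨fun y ↦ ?_⟩
  obtain ⟨U, hU, hmU⟩ := m.finiteAt_nhds (e.symm y)
  refine ⟨e.symm ⁻¹' U, e.symm.continuous.continuousAt hU, ?_⟩
  rwa [← e.toMeasurableEquiv_coe, MeasurableEquiv.map_apply, e.toMeasurableEquiv_coe,
    ← preimage_comp, e.symm_comp_self, preimage_id]

lemma nullSingletonClass_map_measurableEquiv [NullSingletonClass m] (e : α ≃ᵐ β) :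
    NullSingletonClass (m.map e) := by
  refine ⟨fun y ↦ ?_⟩
  rw [MeasurableEquiv.map_apply, ← e.image_symm, image_singleton, measure_singleton]

lemma IsDiffuseClock.map_add_right {m : Measure ℝ} (hm : IsDiffuseClock m) (r : ℝ) :
    IsDiffuseClock (m.map (· + r)) := by
  have := hm.isLocallyFinite
  have := hm.nullSingleton
  refine ⟨isLocallyFiniteMeasure_map_homeomorph (Homeomorph.addRight r),
    nullSingletonClass_map_measurableEquiv (MeasurableEquiv.addRight r), ?_, ?_⟩
  · rw [Measure.map_apply (by fun_prop) measurableSet_Ici, preimage_add_const_Ici]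
    by_contra h
    refine measure_union_ne_top h (measure_Icc_lt_top (a := 0) (b := 0 - r)).ne
      (measure_mono_top (fun x (hx : 0 ≤ x) ↦ ?_) hm.measure_Ici)
    exact (le_total (0 - r) x).imp id fun hxr ↦ ⟨hx, hxr⟩
  · rw [Measure.map_apply (by fun_prop) measurableSet_Iic, preimage_add_const_Iic]
    by_contra h
    refine measure_union_ne_top h (measure_Icc_lt_top (a := 0 - r) (b := 0)).ne
      (measure_mono_top (fun x (hx : x ≤ 0) ↦ ?_) hm.measure_Iic)
    exact (le_total x (0 - r)).imp id fun hxr ↦ ⟨hxr, hx⟩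

end Translation

section PalmVersion

open PathSpace

variable {W : Measure PathSpace} {L Λ : Kernel PathSpace ℝ}

/-- A kernel `Λ` giving, for almost every path `v` of law `W`, the measure which, moved along with
the origin, yields the local time `L` at almost all shifts of `v`. It is needed because a local
time is only determined up to null sets of `stationaryMeasure W`, to which `W` is singular. -/
def IsPalmVersion (W : Measure PathSpace) (L Λ : Kernel PathSpace ℝ) : Prop :=
  ∀ᵐ v ∂W, ∀ᵐ s : ℝ, L (v.shift (-s)) = (Λ v).map (· + s)

lemma IsLocalTime.exists_isPalmVersion [IsSFiniteKernel L] (hL : IsLocalTime W L)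
    (hW : IsTwoSidedBM W coord) :
    ∃ Λ : Kernel PathSpace ℝ, IsSFiniteKernel Λ ∧ IsPalmVersion W L Λ := by
  have := hW.isProbabilityMeasure
  obtain ⟨s₀, hs₀⟩ := (Measure.ae_ae_of_ae_prod (hW.ae_prod_shift_neg (hL.ae_shift_eq hW))).exists
  refine ⟨(L.comap (shift (-s₀)) (by fun_prop)).map (· - s₀), inferInstance,
    hs₀.mono fun v hv ↦ ?_⟩
  filter_upwards [(volume.measurePreserving_sub_left s₀).quasiMeasurePreserving.ae hv]
    with s hs
  rw [shift_shift, show -s₀ + (s₀ - s) = -s by ring] at hs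
  rw [hs, Kernel.map_apply _ (by fun_prop), Kernel.comap_apply,
    Measure.map_map (by fun_prop) (by fun_prop)]
  congr 1
  ext x
  simp only [Function.comp_apply]
  ring

namespace IsPalmVersion

lemma ae_exists_eq_map_add_right (hΛ : IsPalmVersion W L Λ) (hW : IsTwoSidedBM W coord)
    {p : PathSpace → Prop} (h : ∀ᵐ w ∂stationaryMeasure W, p w) :
    ∀ᵐ v ∂W, ∃ w, p w ∧ ∃ r, Λ v = (L w).map (· + r) := by
  filter_upwards [hΛ, hW.ae_ae_shift_neg h] with v hv hp
  obtain ⟨s, hs, hps⟩ := (hv.and hp).exists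
  refine ⟨_, hps, -s, ?_⟩
  simp [hs, Measure.map_map (measurable_add_const _) (measurable_add_const s), Function.comp_def]

variable [IsSFiniteKernel L]

lemma ae_isLocallyFiniteMeasure (hΛ : IsPalmVersion W L Λ) (hL : IsLocalTime W L)
    (hW : IsTwoSidedBM W coord) : ∀ᵐ v ∂W, IsLocallyFiniteMeasure (Λ v) := by
  filter_upwards [hΛ.ae_exists_eq_map_add_right hW (hL.ae_isLocallyFiniteMeasure hW)]
    with v ⟨w, _, r, hv⟩
  exact hv ▸ isLocallyFiniteMeasure_map_homeomorph (Homeomorph.addRight r)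

lemma ae_nullSingletonClass (hΛ : IsPalmVersion W L Λ) (hL : IsLocalTime W L)
    (hW : IsTwoSidedBM W coord) : ∀ᵐ v ∂W, NullSingletonClass (Λ v) := by
  filter_upwards [hΛ.ae_exists_eq_map_add_right hW (hL.ae_nullSingletonClass hW)]
    with v ⟨w, _, r, hv⟩
  exact hv ▸ nullSingletonClass_map_measurableEquiv (MeasurableEquiv.addRight r)

end IsPalmVersion

end PalmVersion

section Recurrence

open PathSpace

variable {W : Measure PathSpace} {L Λ : Kernel PathSpace ℝ} {A : Set (PathSpace × ℝ)} {C : Set ℝ}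
  {a : ℝ≥0∞} {t K : ℝ}

namespace IsTwoSidedBM

lemma measure_le_abs_sub_le {Ω : Type*} [MeasurableSpace Ω] {P : Measure Ω} {B : ℝ → Ω → ℝ}
    (hB : IsTwoSidedBM P B) (s t : ℝ) (hK : 0 < K) :
    P {ω | K ≤ |B t ω - B s ω|} ≤ ENNReal.ofReal (|t - s| / K ^ 2) := by
  have hmeas : MeasurableSet {x : ℝ | K ≤ |x|} := measurableSet_le measurable_const (by fun_prop)
  have := meas_ge_le_variance_div_sq
    (memLp_id_gaussianReal (μ := 0) (v := Real.nnabs (t - s)) 2) hK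
  simp only [variance_id_gaussianReal, integral_id_gaussianReal, id, sub_zero] at this
  rw [← hB.map_sub s t, Measure.map_apply_of_aemeasurable (hB.aemeasurable_sub s t) hmeas] at this
  simpa using this

lemma campbellMeasure_le_abs_zero_le (hW : IsTwoSidedBM W coord) (hK : 0 < K) (t : ℝ) :
    campbellMeasure W ({z | K ≤ |z.1 0|} ∩ Prod.snd ⁻¹' Ico 0 t) ≤
      ENNReal.ofReal (t / K ^ 2) * ENNReal.ofReal t := by
  have := hW.isProbabilityMeasure
  have hmeas : MeasurableSet {z : PathSpace × ℝ | K ≤ |z.1 0|} :=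
    measurableSet_le measurable_const (measurable_apply measurable_fst measurable_const).abs
  have abs_shift (s : ℝ) : W {v | K ≤ |v.shift (-s) 0|} = W {v | K ≤ |v (-s) - v 0|} := by
    refine measure_congr (hW.zero.mono fun v (hv : v 0 = 0) ↦ ?_)
    change (K ≤ |v (-s + 0)|) = (K ≤ |v (-s) - v 0|)
    rw [add_zero, hv, sub_zero]
  rw [campbellMeasure_inter_preimage_snd hmeas measurableSet_Ico,
    Measure.prod_apply (hmeas.preimage (by fun_prop))]
  calc ∫⁻ s in Ico 0 t, W {v | K ≤ |v.shift (-s) 0|}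
      ≤ ∫⁻ _ in Ico 0 t, ENNReal.ofReal (t / K ^ 2) := by
        refine setLIntegral_mono measurable_const fun s hs ↦ ?_
        rw [abs_shift]
        refine (hW.measure_le_abs_sub_le 0 (-s) hK).trans (ENNReal.ofReal_le_ofReal ?_)
        have : |-s - 0| ≤ t := by simpa [abs_of_nonneg hs.1] using hs.2.le
        gcongr
    _ = ENNReal.ofReal (t / K ^ 2) * ENNReal.ofReal t := by simp

end IsTwoSidedBM

lemma measurableSet_preimage_sub_le [IsSFiniteKernel L] (hC : MeasurableSet C) (a : ℝ≥0∞) :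
    MeasurableSet {z : PathSpace × ℝ | L z.1 ((· - z.2) ⁻¹' C) ≤ a} := by
  have : MeasurableSet {y : (PathSpace × ℝ) × ℝ | y.2 - y.1.2 ∈ C} :=
    (by fun_prop : Measurable fun y : (PathSpace × ℝ) × ℝ ↦ y.2 - y.1.2) hC
  exact measurableSet_le (Kernel.measurable_kernel_prodMk_left
    (κ := L.comap Prod.fst measurable_fst) this) measurable_const

lemma IsLocalTime.campbellMeasure_abs_zero_le_le [IsSFiniteKernel L] (hL : IsLocalTime W L)
    (hW : IsTwoSidedBM W coord) (hC : MeasurableSet C)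
    (hC' : ∀ K, IsCompact K → K.Nonempty → ∃ s ∈ K, K ⊆ (· - s) ⁻¹' C) (K : ℝ) (a : ℝ≥0∞) :
    campbellMeasure W ({z | L z.1 ((· - z.2) ⁻¹' C) ≤ a} ∩ Prod.fst ⁻¹' {w | |w 0| ≤ K}) ≤
      a * ENNReal.ofReal (2 * K) := by
  have := hW.sigmaFinite_stationaryMeasure
  have hK : MeasurableSet {w : PathSpace | |w 0| ≤ K} :=
    measurableSet_le (measurable_apply measurable_id measurable_const).abs measurable_const
  have hA := measurableSet_preimage_sub_le (L := L) hC a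
  rw [← hL, Measure.compProd_apply (hA.inter (measurable_fst hK)),
    ← hW.stationaryMeasure_abs_zero_le K, ← setLIntegral_const, ← lintegral_indicator hK]
  refine lintegral_mono_ae ?_
  filter_upwards [hL.ae_isLocallyFiniteMeasure hW] with w _
  by_cases hw : |w 0| ≤ K
  · simpa [hw, preimage, indicator] using
      measure_setOf_measure_le_le (m := L w) hC' (measurable_prodMk_left hA)
  · simp [hw]

lemma IsPalmVersion.campbellMeasure_inter_preimage_snd [IsSFiniteKernel L]
    (hΛ : IsPalmVersion W L Λ) (hW : IsTwoSidedBM W coord) (hC : MeasurableSet C) (t : ℝ)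
    (a : ℝ≥0∞) :
    campbellMeasure W ({z | L z.1 ((· - z.2) ⁻¹' C) ≤ a} ∩ Prod.snd ⁻¹' Ico 0 t) =
      ENNReal.ofReal t * W {v | Λ v C ≤ a} := by
  have := hW.isProbabilityMeasure
  have hA := measurableSet_preimage_sub_le (L := L) hC a
  have hΛC : MeasurableSet {v | Λ v C ≤ a} :=
    measurableSet_le (Λ.measurable_coe hC) measurable_const
  rw [_root_.campbellMeasure_inter_preimage_snd hA measurableSet_Ico,
    Measure.prod_apply_symm (hA.preimage (by fun_prop)), ← lintegral_indicator_const hΛC]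
  refine lintegral_congr_ae (hΛ.mono fun v hv ↦ ?_)
  have (r : ℝ) : (fun x ↦ x + r) ⁻¹' ((fun x ↦ x - r) ⁻¹' C) = C := by ext; simp
  have hset : {s | L (v.shift (-s)) ((· - s) ⁻¹' C) ≤ a} =ᵐ[volume.restrict (Ico 0 t)]
      {_s | Λ v C ≤ a} := by
    filter_upwards [ae_restrict_of_ae hv] with s hs
    change (L (v.shift (-s)) ((· - s) ⁻¹' C) ≤ a) = (Λ v C ≤ a)
    rw [hs, Measure.map_apply (by fun_prop) (hC.preimage (by fun_prop)), this]
  refine (measure_congr hset).trans ?_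
  by_cases hva : Λ v C ≤ a <;> simp [hva]

namespace IsPalmVersion

variable [IsSFiniteKernel L]

lemma ofReal_mul_measure_le_le (hΛ : IsPalmVersion W L Λ) (hL : IsLocalTime W L)
    (hW : IsTwoSidedBM W coord) (hC : MeasurableSet C)
    (hC' : ∀ K, IsCompact K → K.Nonempty → ∃ s ∈ K, K ⊆ (· - s) ⁻¹' C) (a : ℝ≥0∞) (t : ℝ)
    (hK : 0 < K) :
    ENNReal.ofReal t * W {v | Λ v C ≤ a} ≤
      a * ENNReal.ofReal (2 * K) + ENNReal.ofReal (t / K ^ 2) * ENNReal.ofReal t := by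
  rw [← hΛ.campbellMeasure_inter_preimage_snd hW hC]
  refine (measure_mono fun z hz ↦ ?_).trans ((measure_union_le _ _).trans
    (add_le_add (hL.campbellMeasure_abs_zero_le_le hW hC hC' K a)
      (hW.campbellMeasure_le_abs_zero_le hK t)))
  exact (le_total |z.1 0| K).imp (fun h ↦ ⟨hz.1, h⟩) fun h ↦ ⟨h, hz.2⟩

lemma measure_le_eq_zero (hΛ : IsPalmVersion W L Λ) (hL : IsLocalTime W L)
    (hW : IsTwoSidedBM W coord) (hC : MeasurableSet C)
    (hC' : ∀ K, IsCompact K → K.Nonempty → ∃ s ∈ K, K ⊆ (· - s) ⁻¹' C) (ha : a ≠ ∞) :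
    W {v | Λ v C ≤ a} = 0 := by
  by_contra hpos
  obtain ⟨N, hN⟩ := ENNReal.exists_nat_mul_gt hpos (b := a * 2 + 1) (by finiteness)
  have hN0 : (N : ℝ) ≠ 0 := by
    rintro h
    simp [Nat.cast_eq_zero.1 h] at hN
  -- `t = N ^ 3` and `K = N ^ 2` make the right-hand side of order `N ^ 2`.
  have key := hΛ.ofReal_mul_measure_le_le hL hW hC hC' a (N ^ 3) (K := N ^ 2) (by positivity)
  rw [← ENNReal.ofReal_mul (by positivity),
    show (N : ℝ) ^ 3 / (N ^ 2) ^ 2 * N ^ 3 = N ^ 2 by field_simp,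
    ENNReal.ofReal_mul zero_le_two] at key
  simp only [ENNReal.ofReal_pow (Nat.cast_nonneg N), ENNReal.ofReal_natCast,
    ENNReal.ofReal_ofNat] at key
  refine hN.not_ge ((ENNReal.mul_le_mul_iff_right (a := (N : ℝ≥0∞) ^ 2) ?_ (by finiteness)).1 ?_)
  · simpa using hN0
  · calc (N : ℝ≥0∞) ^ 2 * (N * W {v | Λ v C ≤ a}) = N ^ 3 * W {v | Λ v C ≤ a} := by ring
      _ ≤ a * (2 * N ^ 2) + N ^ 2 := key
      _ = N ^ 2 * (a * 2 + 1) := by ring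

lemma ae_apply_eq_top (hΛ : IsPalmVersion W L Λ) (hL : IsLocalTime W L)
    (hW : IsTwoSidedBM W coord) (hC : MeasurableSet C)
    (hC' : ∀ K, IsCompact K → K.Nonempty → ∃ s ∈ K, K ⊆ (· - s) ⁻¹' C) :
    ∀ᵐ v ∂W, Λ v C = ∞ := by
  have (n : ℕ) : ∀ᵐ v ∂W, ¬ Λ v C ≤ n := by
    simpa [ae_iff] using hΛ.measure_le_eq_zero hL hW hC hC' (ENNReal.natCast_ne_top n)
  filter_upwards [ae_all_iff.2 this] with v hv
  by_contra h
  obtain ⟨n, hn⟩ := ENNReal.exists_nat_gt h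
  exact hv n hn.le

theorem ae_isDiffuseClock (hΛ : IsPalmVersion W L Λ) (hL : IsLocalTime W L)
    (hW : IsTwoSidedBM W coord) : ∀ᵐ v ∂W, IsDiffuseClock (Λ v) := by
  have measure_Ici : ∀ᵐ v ∂W, Λ v (Ici 0) = ∞ := by
    refine hΛ.ae_apply_eq_top hL hW measurableSet_Ici fun K hK hne ↦ ?_
    obtain ⟨s, hs, hle⟩ := hK.exists_isLeast hne
    exact ⟨s, hs, fun x hx ↦ sub_nonneg.2 (hle hx)⟩
  have measure_Iic : ∀ᵐ v ∂W, Λ v (Iic 0) = ∞ := by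
    refine hΛ.ae_apply_eq_top hL hW measurableSet_Iic fun K hK hne ↦ ?_
    obtain ⟨s, hs, hle⟩ := hK.exists_isGreatest hne
    exact ⟨s, hs, fun x hx ↦ sub_nonpos.2 (hle hx)⟩
  filter_upwards [hΛ.ae_isLocallyFiniteMeasure hL hW, hΛ.ae_nullSingletonClass hL hW,
    measure_Ici, measure_Iic] with v h₁ h₂ h₃ h₄ using ⟨h₁, h₂, h₃, h₄⟩

lemma ae_isDiffuseClock_of_ne_zero (hΛ : IsPalmVersion W L Λ) (hL : IsLocalTime W L)
    (hW : IsTwoSidedBM W coord) :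
    ∀ᵐ w ∂stationaryMeasure W, L w ≠ 0 → IsDiffuseClock (L w) := by
  have := hW.isProbabilityMeasure
  have := hW.sigmaFinite_stationaryMeasure
  let E : Set PathSpace := {w | L w (Ici 0) = ∞ ∧ L w (Iic 0) = ∞}
  have hE : MeasurableSet E :=
    (L.measurable_coe measurableSet_Ici (measurableSet_singleton ∞)).inter
      (L.measurable_coe measurableSet_Iic (measurableSet_singleton ∞))
  have hcampbell : ∀ᵐ z ∂campbellMeasure W, z.1 ∈ E := by
    have hE' : MeasurableSet {q : ℝ × PathSpace | q.2.shift (-q.1) ∈ E} :=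
      hE.preimage (by fun_prop)
    rw [campbellMeasure, ae_map_iff (by fun_prop) (measurable_fst hE),
      Measure.ae_prod_iff_ae_ae hE', Measure.ae_ae_comm hE']
    filter_upwards [hΛ, hΛ.ae_isDiffuseClock hL hW] with v hv hclock
    filter_upwards [hv] with s hs
    have := hclock.map_add_right s
    exact ⟨hs ▸ this.measure_Ici, hs ▸ this.measure_Iic⟩
  rw [← hL] at hcampbell
  filter_upwards [Measure.ae_ae_of_ae_compProd hcampbell, hL.ae_isLocallyFiniteMeasure hW,
    hL.ae_nullSingletonClass hW] with w hw h₁ h₂ h₀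
  have : NeBot (ae (L w)) := ae_neBot.2 h₀
  obtain ⟨_, hw⟩ := hw.exists
  exact ⟨h₁, h₂, hw.1, hw.2⟩

end IsPalmVersion

end Recurrence

section MassShift

open PathSpace

lemma measurePreserving_compProd_of_ae_map_eq {α β : Type*} [MeasurableSpace α]
    [MeasurableSpace β] {μ : Measure α} [SFinite μ] {κ : Kernel α β} [IsSFiniteKernel κ]
    {f : α → β → β} (hf : Measurable fun z : α × β ↦ f z.1 z.2)
    (h : ∀ᵐ a ∂μ, (κ a).map (f a) = κ a) :
    MeasurePreserving (fun z : α × β ↦ (z.1, f z.1 z.2)) (μ ⊗ₘ κ) (μ ⊗ₘ κ) := by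
  have hf' : Measurable fun z : α × β ↦ (z.1, f z.1 z.2) := measurable_fst.prodMk hf
  refine ⟨hf', Measure.ext fun A hA ↦ ?_⟩
  rw [Measure.map_apply hf' hA, Measure.compProd_apply (hf' hA), Measure.compProd_apply hA]
  refine lintegral_congr_ae (h.mono fun a ha ↦ ?_)
  dsimp only
  rw [← congrArg (· (Prod.mk a ⁻¹' A)) ha]
  exact (Measure.map_apply hf.of_uncurry_left (measurable_prodMk_left hA)).symm

lemma measurePreserving_of_skewProduct {α : Type*} [MeasurableSpace α] {μ : Measure α} [SFinite μ]
    {τ : α → ℝ} {f : α → α} (hf : Measurable f)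
    (h : MeasurePreserving (fun q : ℝ × α ↦ (q.1 + τ q.2, f q.2)) (volume.prod μ)
      (volume.prod μ)) : MeasurePreserving f μ μ := by
  refine ⟨hf, Measure.ext fun A hA ↦ ?_⟩
  have hI : MeasurableSet (Ico (0 : ℝ) 1 ×ˢ A) := measurableSet_Ico.prod hA
  have key := h.measure_preimage hI.nullMeasurableSet
  rw [Measure.prod_apply_symm (h.measurable hI), Measure.prod_prod, Real.volume_Ico, sub_zero,
    ENNReal.ofReal_one, one_mul] at key
  rw [Measure.map_apply hf hA, ← key, ← lintegral_indicator_one (hf hA)]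
  refine lintegral_congr fun a ↦ ?_
  by_cases ha : f a ∈ A
  · have : (fun s ↦ (s, a)) ⁻¹' ((fun q ↦ (q.1 + τ q.2, f q.2)) ⁻¹' (Ico 0 1 ×ˢ A)) =
        (· + τ a) ⁻¹' Ico 0 1 := by
      simp [preimage, ha]
    rw [this, measure_preimage_add_right, indicator_of_mem (s := f ⁻¹' A) ha]
    simp
  · simp [preimage, ha]

variable {W : Measure PathSpace} {L Λ : Kernel PathSpace ℝ} [IsSFiniteKernel L] {c : ℝ≥0∞}

namespace IsPalmVersion

lemma measurePreserving_nextTime_campbellMeasure (hΛ : IsPalmVersion W L Λ)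
    (hL : IsLocalTime W L) (hW : IsTwoSidedBM W coord) (hc : c ≠ 0) (hc' : c ≠ ∞) :
    MeasurePreserving (fun z ↦ (z.1, nextTime c (L z.1) z.2)) (campbellMeasure W)
      (campbellMeasure W) := by
  have := hW.sigmaFinite_stationaryMeasure
  rw [← hL]
  refine measurePreserving_compProd_of_ae_map_eq (f := fun w ↦ nextTime c (L w))
    (measurable_snd.add (measurable_waitTime c L measurable_fst measurable_snd).ennreal_toReal) ?_
  filter_upwards [hΛ.ae_isDiffuseClock_of_ne_zero hL hW] with w hw
  by_cases h₀ : L w = 0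
  · simp [h₀]
  · exact (hw h₀).map_nextTime hc hc'

lemma ae_prod_waitTime_eq [SFinite W] [IsSFiniteKernel Λ] (hΛ : IsPalmVersion W L Λ) (c : ℝ≥0∞) :
    ∀ᵐ q ∂(volume : Measure ℝ).prod W,
      waitTime c (L (q.2.shift (-q.1))) q.1 = waitTime c (Λ q.2) 0 := by
  have hmeas : MeasurableSet {q : ℝ × PathSpace |
      waitTime c (L (q.2.shift (-q.1))) q.1 = waitTime c (Λ q.2) 0} :=
    measurableSet_eq_fun (measurable_waitTime c L (by fun_prop) measurable_fst)
      (measurable_waitTime c Λ measurable_snd measurable_const)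
  rw [Measure.ae_prod_iff_ae_ae hmeas, Measure.ae_ae_comm hmeas]
  filter_upwards [hΛ] with v hv
  filter_upwards [hv] with s hs
  simpa [hs] using waitTime_map_add_right c (Λ v) 0 s

theorem measurePreserving_shift_waitTime [IsSFiniteKernel Λ] (hΛ : IsPalmVersion W L Λ)
    (hL : IsLocalTime W L) (hW : IsTwoSidedBM W coord) (hc : c ≠ 0) (hc' : c ≠ ∞) :
    MeasurePreserving (fun v ↦ v.shift (waitTime c (Λ v) 0).toReal) W W := by
  have := hW.isProbabilityMeasure
  have hτ : Measurable fun v ↦ (waitTime c (Λ v) 0).toReal :=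
    (measurable_waitTime c Λ measurable_id measurable_const).ennreal_toReal
  have hτ' : Measurable fun q : ℝ × PathSpace ↦ (waitTime c (Λ q.2) 0).toReal :=
    hτ.comp measurable_snd
  have hΦ : MeasurePreserving (fun q : ℝ × PathSpace ↦ (q.2.shift (-q.1), q.1))
      (volume.prod W) (campbellMeasure W) := ⟨by fun_prop, rfl⟩
  have hΨ : MeasurePreserving (fun z : PathSpace × ℝ ↦ (z.2, z.1.shift z.2))
      (campbellMeasure W) (volume.prod W) := by
    refine ⟨by fun_prop, ?_⟩
    rw [campbellMeasure, Measure.map_map (by fun_prop) (by fun_prop)]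
    simp [Function.comp_def, shift_shift, shift_zero]
  refine measurePreserving_of_skewProduct (measurable_shift measurable_id hτ)
    (τ := fun v ↦ (waitTime c (Λ v) 0).toReal) ?_
  refine (hΨ.comp ((hΛ.measurePreserving_nextTime_campbellMeasure hL hW hc hc').comp hΦ)).congr
    ((measurable_fst.add hτ').prodMk (measurable_shift measurable_snd hτ'))
    ((hΛ.ae_prod_waitTime_eq c).mono fun q hq ↦ ?_)
  simp [nextTime, hq, shift_shift]

end IsPalmVersion

end MassShift

section Thinning

open PathSpace

lemma continuous_cdf (γ : Measure ℝ) [IsProbabilityMeasure γ] [NullSingletonClass γ] :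
    Continuous (cdf γ) := by
  refine continuous_iff_continuousAt.2 fun x ↦ ?_
  rw [(monotone_cdf γ).continuousAt_iff_leftLim_eq_rightLim, StieltjesFunction.rightLim_eq]
  have hjump := (cdf γ).measure_singleton x
  rw [measure_cdf, measure_singleton] at hjump
  exact ((monotone_cdf γ).leftLim_le le_rfl).antisymm
    (sub_nonpos.1 (ENNReal.ofReal_eq_zero.1 hjump.symm))

lemma exists_measurableSet_measure_eq_ofReal (γ : Measure ℝ) [IsProbabilityMeasure γ]
    [NullSingletonClass γ] {q : ℝ} (hq : q ∈ Icc (0 : ℝ) 1) :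
    ∃ D : Set ℝ, MeasurableSet D ∧ γ D = ENNReal.ofReal q := by
  rcases hq.1.eq_or_lt with rfl | h0
  · exact ⟨∅, MeasurableSet.empty, by simp⟩
  rcases hq.2.eq_or_lt with rfl | h1
  · exact ⟨univ, MeasurableSet.univ, by simp⟩
  obtain ⟨a, ha⟩ := ((tendsto_cdf_atBot γ).eventually (ge_mem_nhds h0)).exists
  obtain ⟨b, hb⟩ := ((tendsto_cdf_atTop γ).eventually (le_mem_nhds h1)).exists
  obtain ⟨x, hx⟩ := mem_range_of_exists_le_of_exists_ge (continuous_cdf γ) ⟨a, ha⟩ ⟨b, hb⟩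
  exact ⟨Iic x, measurableSet_Iic, by rw [← ofReal_cdf, hx]⟩

lemma IsTwoSidedBM.exists_measurableSet_measure_eq_ofReal {Ω : Type*} [MeasurableSpace Ω]
    {P : Measure Ω} {B : ℝ → Ω → ℝ} (hB : IsTwoSidedBM P B) (hB' : ∀ t, Measurable (B t))
    {q : ℝ} (hq : q ∈ Icc (0 : ℝ) 1) :
    ∃ D : Set Ω, MeasurableSet D ∧ P D = ENNReal.ofReal q := by
  have : NullSingletonClass (gaussianReal 0 1) := nullSingletonClass_gaussianReal one_ne_zero
  obtain ⟨D, hD, hDq⟩ := _root_.exists_measurableSet_measure_eq_ofReal (gaussianReal 0 1) hq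
  have hincr : Measurable fun ω ↦ B 1 ω - B 0 ω := (hB' 1).sub (hB' 0)
  refine ⟨_, hincr hD, ?_⟩
  rw [← hDq, ← Measure.map_apply hincr hD, hB.gaussIncr 0 1 one_pos, sub_zero, Real.toNNReal_one]

lemma iterate_shift (τ : PathSpace → ℝ) (n : ℕ) (v : PathSpace) :
    (fun v ↦ v.shift (τ v))^[n] v = v.shift (birkhoffSum (fun v ↦ v.shift (τ v)) τ n v) := by
  induction n with
  | zero => simp [shift_zero]
  | succ n ih => rw [Function.iterate_succ_apply', birkhoffSum_succ, ← shift_shift, ← ih]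

lemma measurable_birkhoffSum {α : Type*} [MeasurableSpace α] {S : α → α} {τ : α → ℝ}
    (hS : Measurable S) (hτ : Measurable τ) (n : ℕ) : Measurable (birkhoffSum S τ n) :=
  Finset.measurable_sum _ fun j _ ↦ hτ.comp (hS.iterate j)

theorem exists_measurePreserving_shift_of_measurableSet {W : Measure PathSpace} [IsFiniteMeasure W]
    {τ : PathSpace → ℝ} (hτ : Measurable τ) (hτ₀ : 0 ≤ τ) (hτ_pos : ∀ᵐ v ∂W, 0 < τ v)
    (hS : MeasurePreserving (fun v ↦ v.shift (τ v)) W W) {D : Set PathSpace}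
    (hD : MeasurableSet D) :
    ∃ σ : PathSpace → ℝ, Measurable σ ∧ 0 ≤ σ ∧ (∀ᵐ v ∂W, σ v = 0 ↔ v ∉ D) ∧
      MeasurePreserving (fun v ↦ v.shift (σ v)) W W := by
  set S : PathSpace → PathSpace := fun v ↦ v.shift (τ v)
  have hUmeas : Measurable fun z : ℕ × PathSpace ↦ birkhoffSum S τ z.1 z.2 :=
    measurable_from_prod_countable_right (measurable_birkhoffSum hS.measurable hτ)
  refine ⟨fun v ↦ birkhoffSum S τ (returnTime S D v) v,
    hUmeas.comp ((measurable_returnTime hS.measurable hD).prodMk measurable_id),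
    fun v ↦ Finset.sum_nonneg fun j _ ↦ hτ₀ _, ?_, ?_⟩
  · filter_upwards [ae_returnTime_pos hS.conservative hD, hτ_pos] with v hreturn hpos
    refine ⟨fun h hv ↦ ?_, fun hv ↦ ?_⟩
    · have : τ (S^[0] v) ≤ birkhoffSum S τ (returnTime S D v) v :=
        Finset.single_le_sum (f := fun j ↦ τ (S^[j] v)) (fun j _ ↦ hτ₀ _)
          (Finset.mem_range.2 (hreturn hv))
      exact (hpos.trans_le this).ne' h
    · rw [returnTime_of_notMem hv, birkhoffSum_zero]
  · simpa only [S, iterate_shift] using measurePreserving_iterate_returnTime hS hD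

end Thinning

section RandomTimes

open PathSpace

variable {Ω : Type*} [MeasurableSpace Ω] {P : Measure Ω} {B : ℝ → Ω → ℝ} {π : Ω → PathSpace}
  {τ : PathSpace → ℝ} {T : Ω → ℝ}

lemma exists_isRandomTime (B : ℝ → Ω → ℝ) (hτ : Measurable τ) (hτ₀ : 0 ≤ τ) :
    ∃ T : Ω → ℝ, (∀ ω, 0 ≤ T ω) ∧ IsRandomTime B T ∧
      ∀ ω (v : PathSpace), (∀ t, B t ω = v t) → T ω = τ v := by
  obtain ⟨h, hh, rfl⟩ := hτ.exists_eq_measurable_comp (f := (Subtype.val : PathSpace → ℝ → ℝ))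
  refine ⟨fun ω ↦ max 0 (h fun t ↦ B t ω), fun ω ↦ le_max_left _ _,
    (measurable_const.max hh).comp (comap_measurable _), fun ω v hv ↦ ?_⟩
  exact (congrArg (fun w ↦ max 0 (h w)) (funext hv)).trans (max_eq_right (hτ₀ v))

namespace IsTwoSidedBM

lemma ae_apply_eq_zero_of_measurePreserving_shift (hB : IsTwoSidedBM P B) (hπ : Measurable π)
    (hBπ : ∀ᵐ ω ∂P, ∀ t, B t ω = π ω t) (hTτ : ∀ᵐ ω ∂P, T ω = τ (π ω))
    (hτ : MeasurePreserving (fun v ↦ v.shift (τ v)) (P.map π) (P.map π)) :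
    ∀ᵐ ω ∂P, B (T ω) ω = 0 := by
  have hW : IsTwoSidedBM (P.map π) coord := (isTwoSidedBM_map_iff hπ).2 (hB.congr hBπ)
  filter_upwards [ae_of_ae_map hπ.aemeasurable (hτ.quasiMeasurePreserving.ae hW.zero), hTτ, hBπ]
    with ω hzero hT hω
  rw [hT, hω]
  simpa [shift, coord] using hzero

theorem isUnbiasedShift_of_measurePreserving_shift (hB : IsTwoSidedBM P B) (hπ : Measurable π)
    (hBπ : ∀ᵐ ω ∂P, ∀ t, B t ω = π ω t) (hT : IsRandomTime B T) (hTτ : ∀ᵐ ω ∂P, T ω = τ (π ω))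
    (hτ : MeasurePreserving (fun v ↦ v.shift (τ v)) (P.map π) (P.map π)) :
    IsUnbiasedShift P B T := by
  have := hB.isProbabilityMeasure
  have hzero := hB.ae_apply_eq_zero_of_measurePreserving_shift hπ hBπ hTτ hτ
  refine ⟨hT, ?_, (indepFun_const_right _ 0).congr EventuallyEq.rfl
    (hzero.mono fun ω hω ↦ hω.symm)⟩
  have hshift : IsTwoSidedBM P fun t ω ↦ (π ω).shift (τ (π ω)) t := by
    refine (isTwoSidedBM_map_iff (hτ.measurable.comp hπ)).1 ?_
    rw [← Measure.map_map hτ.measurable hπ, hτ.map_eq]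
    exact (isTwoSidedBM_map_iff hπ).2 (hB.congr hBπ)
  refine hshift.congr ?_
  filter_upwards [hzero, hTτ, hBπ] with ω h₀ hTω hω t
  rw [h₀, sub_zero, hTω, hω]
  rfl

theorem embeds_of_measurePreserving_shift (hB : IsTwoSidedBM P B) (hπ : Measurable π)
    (hBπ : ∀ᵐ ω ∂P, ∀ t, B t ω = π ω t) (hTτ : ∀ᵐ ω ∂P, T ω = τ (π ω))
    (hτ : MeasurePreserving (fun v ↦ v.shift (τ v)) (P.map π) (P.map π)) :
    Embeds P B T (Measure.dirac 0) := by
  have := hB.isProbabilityMeasure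
  have hzero := hB.ae_apply_eq_zero_of_measurePreserving_shift hπ hBπ hTτ hτ
  rw [Embeds, Measure.map_congr (g := fun _ ↦ (0 : ℝ)) hzero, Measure.map_const, measure_univ,
    one_smul]

theorem exists_measurePreserving_shift {W : Measure PathSpace} (hW : IsTwoSidedBM W coord) :
    ∃ τ : PathSpace → ℝ, Measurable τ ∧ 0 ≤ τ ∧ (∀ᵐ v ∂W, 0 < τ v) ∧
      MeasurePreserving (fun v ↦ v.shift (τ v)) W W := by
  obtain ⟨L, _, hL⟩ := hW.exists_isLocalTime
  obtain ⟨Λ, _, hΛ⟩ := hL.exists_isPalmVersion hW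
  refine ⟨fun v ↦ (waitTime 1 (Λ v) 0).toReal,
    (measurable_waitTime 1 Λ measurable_id measurable_const).ennreal_toReal,
    fun _ ↦ ENNReal.toReal_nonneg, ?_,
    hΛ.measurePreserving_shift_waitTime hL hW one_ne_zero ENNReal.one_ne_top⟩
  filter_upwards [hΛ.ae_isDiffuseClock hL hW] with v hv
  exact ENNReal.toReal_pos (hv.waitTime_pos one_ne_zero 0).ne'
    (hv.waitTime_ne_top ENNReal.one_ne_top 0)

theorem exists_measurePreserving_shift_measure_eq_zero {W : Measure PathSpace}
    (hW : IsTwoSidedBM W coord) {p : ℝ} (hp : p ∈ Icc (0 : ℝ) 1) :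
    ∃ τ : PathSpace → ℝ, Measurable τ ∧ 0 ≤ τ ∧ W {v | τ v = 0} = ENNReal.ofReal p ∧
      MeasurePreserving (fun v ↦ v.shift (τ v)) W W := by
  have := hW.isProbabilityMeasure
  obtain ⟨τ, hτ, hτ₀, hτ_pos, hS⟩ := hW.exists_measurePreserving_shift
  obtain ⟨A, hA, hAp⟩ := hW.exists_measurableSet_measure_eq_ofReal
    (fun t ↦ measurable_apply measurable_id measurable_const) hp
  obtain ⟨σ, hσ, hσ₀, hσA, hσS⟩ :=
    exists_measurePreserving_shift_of_measurableSet hτ hτ₀ hτ_pos hS hA.compl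
  refine ⟨σ, hσ, hσ₀, hAp ▸ measure_congr (hσA.mono fun v hv ↦ propext ?_), hσS⟩
  exact hv.trans notMem_compl_iff

end IsTwoSidedBM

end RandomTimes

/-- for every `p ∈ [0,1]` there is a nonnegative unbiased shift `T` embedding
`δ₀` with `P₀{T = 0} = p`. -/
theorem exists_unbiased_shift_dirac_zero {Ω : Type*} [MeasurableSpace Ω]
    (P : Measure Ω) [IsProbabilityMeasure P]
    (B : ℝ → Ω → ℝ) (hB : IsTwoSidedBM P B)
    (p : ℝ) (hp : p ∈ Set.Icc (0 : ℝ) 1) :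
    ∃ T : Ω → ℝ, (∀ ω, 0 ≤ T ω) ∧ IsUnbiasedShift P B T ∧
      Embeds P B T (Measure.dirac 0) ∧ P {ω | T ω = 0} = ENNReal.ofReal p := by
  obtain ⟨π, hπ, hBπ⟩ := hB.exists_measurable_path
  have hW : IsTwoSidedBM (P.map π) PathSpace.coord :=
    (isTwoSidedBM_map_iff hπ).2 (hB.congr hBπ)
  obtain ⟨τ, hτ, hτ₀, hτp, hS⟩ := hW.exists_measurePreserving_shift_measure_eq_zero hp
  obtain ⟨T, hT₀, hT, hTτ⟩ := exists_isRandomTime B hτ hτ₀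
  have hTπ : ∀ᵐ ω ∂P, T ω = τ (π ω) := hBπ.mono fun ω ↦ hTτ ω (π ω)
  refine ⟨T, hT₀, hB.isUnbiasedShift_of_measurePreserving_shift hπ hBπ hT hTπ hS,
    hB.embeds_of_measurePreserving_shift hπ hBπ hTπ hS, ?_⟩
  calc P {ω | T ω = 0} = P (π ⁻¹' {v | τ v = 0}) :=
        measure_congr (hTπ.mono fun ω hω ↦ congrArg (· = 0) hω)
    _ = P.map π {v | τ v = 0} := (Measure.map_apply hπ (hτ (measurableSet_singleton 0))).symm
    _ = ENNReal.ofReal p := hτp
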